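/- Let 0 < 10r < ρ, let f be a (ρ/10r)-Lipschitz function on B_{N−1}(0,r) with f(0) = 0, and let U = U_f(r,ρ). Let a > 0 and V ∈ 𝒱(U,a). Let u be positive harmonic in U and let v be positive (Δ−V)-harmonic in U, and assume that u = v = 0 on ∂_#U = ∂U ∩ T(1). Then v(x)/v(A) ≤ c · u(x)/u(A) for all x ∈ U ∩ T(1/2), where A = (0,…,0,ρ/2) and c is a positive constant depending only on ρ/r, N and a. -/

import Mathlib

open MeasureTheory Metric Set Filter Topology
open scoped ENNReal NNReal

noncomputable section

namespace Anc

abbrev ES (N : ℕ) := EuclideanSpace ℝ (Fin N)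

/-- `δ_Ω(x)`: the distance from `x` to the complement of `Ω`. -/
def dista {N : ℕ} (Ω : Set (ES N)) (x : ES N) : ℝ := infDist x Ωᶜ

/-- Pointwise Laplacian (junk values where the derivatives do not exist). -/
def lap {N : ℕ} (u : ES N → ℝ) (x : ES N) : ℝ :=
  ∑ i : Fin N,
    fderiv ℝ (fun y => fderiv ℝ u y (EuclideanSpace.single i 1)) x (EuclideanSpace.single i 1)

/-- Smooth compactly supported test functions in `Ω`. -/
def IsTestFun {N : ℕ} (Ω : Set (ES N)) (φ : ES N → ℝ) : Prop :=
  ContDiff ℝ (⊤ : ℕ∞) φ ∧ IsCompact (tsupport φ) ∧ tsupport φ ⊆ Ω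

/-- `u` is a continuous weak solution of `Δu - V·u = 0` in `Ω` (i.e. `L_V`-harmonic). -/
def LVHarmonic {N : ℕ} (Ω : Set (ES N)) (V u : ES N → ℝ) : Prop :=
  ContinuousOn u Ω ∧ LocallyIntegrableOn u Ω ∧
    LocallyIntegrableOn (fun x => V x * u x) Ω ∧
    ∀ φ, IsTestFun Ω φ → ∫ x in Ω, u x * lap φ x = ∫ x in Ω, V x * u x * φ x

/-- `s` is `L_V`-superharmonic in `Ω` (weakly, `Δs - V·s ≤ 0`, `s` l.s.c.). -/
def LVSuperharmonic {N : ℕ} (Ω : Set (ES N)) (V s : ES N → ℝ) : Prop :=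
  LowerSemicontinuousOn s Ω ∧ LocallyIntegrableOn s Ω ∧
    LocallyIntegrableOn (fun x => V x * s x) Ω ∧
    ∀ φ, IsTestFun Ω φ → (∀ x, 0 ≤ φ x) →
      ∫ x in Ω, s x * lap φ x ≤ ∫ x in Ω, V x * s x * φ x

/-- The class `𝒱(Ω,a)` of nonnegative Borel potentials with `V(x) ≤ a/δ_Ω(x)²`. -/
def VClass {N : ℕ} (Ω : Set (ES N)) (a : ℝ) (V : ES N → ℝ) : Prop :=
  Measurable V ∧ ∀ x ∈ Ω, 0 ≤ V x ∧ V x * dista Ω x ^ 2 ≤ a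

/-- Lipschitz domain: open, connected, and near every boundary point, after an
orthogonal change of coordinates, the domain is the region above the graph of a
Lipschitz function. -/
def IsLipschitzDomain {N : ℕ} (Ω : Set (ES N)) : Prop :=
  IsOpen Ω ∧ IsConnected Ω ∧
    ∀ z ∈ frontier Ω, ∃ (g : ES N ≃ₗᵢ[ℝ] ES N) (i : Fin N) (f : ES N → ℝ)
      (L : ℝ≥0) (ε : ℝ), 0 < ε ∧ LipschitzWith L f ∧
      (∀ x w : ES N, (∀ j, j ≠ i → x j = w j) → f x = f w) ∧
      ∀ x ∈ ball z ε, (x ∈ Ω ↔ f (g x) < g x i)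

/-- `Ω` has a `C^{1,α}` boundary near `y`. -/
def IsC1AlphaNear {N : ℕ} (Ω : Set (ES N)) (α : ℝ) (y : ES N) : Prop :=
  ∃ (g : ES N ≃ₗᵢ[ℝ] ES N) (i : Fin N) (f : ES N → ℝ) (C : ℝ≥0) (ε : ℝ),
    0 < ε ∧ ContDiff ℝ 1 f ∧ HolderWith C α.toNNReal (fderiv ℝ f) ∧
    (∀ x w : ES N, (∀ j, j ≠ i → x j = w j) → f x = f w) ∧
    ∀ x ∈ ball y ε, (x ∈ Ω ↔ f (g x) < g x i)

/-- `K` is the `L_V`-Martin kernel of `Ω` with pole `y ∈ ∂Ω`, normalized at `x₀`: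
the unique positive `L_V`-harmonic function vanishing on `∂Ω ∖ {y}` with `K x₀ = 1`. -/
def IsMartinKernel {N : ℕ} (Ω : Set (ES N)) (V : ES N → ℝ) (x₀ y : ES N)
    (K : ES N → ℝ) : Prop :=
  LVHarmonic Ω V K ∧ (∀ x ∈ Ω, 0 < K x) ∧ K x₀ = 1 ∧
    ∀ z ∈ frontier Ω, z ≠ y → Tendsto K (𝓝[Ω] z) (𝓝 0)

/-- `G` is the `L_V`-Green function of `Ω` with pole `y ∈ Ω`:
positive, vanishing at the boundary, and `L_V G = -δ_y` weakly. -/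
def IsGreenFunction {N : ℕ} (Ω : Set (ES N)) (V : ES N → ℝ) (y : ES N)
    (G : ES N → ℝ) : Prop :=
  ContinuousOn G (Ω \ {y}) ∧ (∀ x ∈ Ω \ {y}, 0 < G x) ∧ LocallyIntegrableOn G Ω ∧
    (∀ z ∈ frontier Ω, Tendsto G (𝓝[Ω \ {y}] z) (𝓝 0)) ∧
    ∀ φ, IsTestFun Ω φ → ∫ x in Ω, G x * (lap φ x - V x * φ x) = -φ y

/-- `y ∈ ∂Ω` is finely regular w.r.t. `V`, `Ky` being the classical Martin kernel at
`y`: the greatest `L_V`-harmonic minorant of `Ky` is positive, equivalently `Ky`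
admits a positive `L_V`-harmonic minorant. -/
def FinelyRegular {N : ℕ} (Ω : Set (ES N)) (V Ky : ES N → ℝ) : Prop :=
  ∃ h, LVHarmonic Ω V h ∧ (∀ x ∈ Ω, 0 < h x) ∧ ∀ x ∈ Ω, h x ≤ Ky x

/-- `h` is the greatest nonnegative `L_V`-harmonic minorant of `w` in `Ω`. -/
def IsGreatestLVHarmMinorant {N : ℕ} (Ω : Set (ES N)) (V w h : ES N → ℝ) : Prop :=
  LVHarmonic Ω V h ∧ (∀ x ∈ Ω, 0 ≤ h x ∧ h x ≤ w x) ∧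
    ∀ g, LVHarmonic Ω V g → (∀ x ∈ Ω, 0 ≤ g x ∧ g x ≤ w x) → ∀ x ∈ Ω, g x ≤ h x

/-- Classical superharmonicity via the sub-mean value property. -/
def IsSuperharmonicOn {N : ℕ} (W : Set (ES N)) (s : ES N → ℝ) : Prop :=
  LowerSemicontinuousOn s W ∧ LocallyIntegrableOn s W ∧
    ∀ x ∈ W, ∀ t > (0:ℝ), closedBall x t ⊆ W → ⨍ z in ball x t, s z ≤ s x

/-- The réduite of `w` over `A` in `W`: infimum of the nonnegative superharmonic
functions in `W` dominating `w` on `A`. -/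
def reduite {N : ℕ} (W : Set (ES N)) (w : ES N → ℝ) (A : Set (ES N)) (x : ES N) : ℝ :=
  sInf {v | ∃ s : ES N → ℝ, IsSuperharmonicOn W s ∧ (∀ z ∈ W, 0 ≤ s z) ∧
    (∀ z ∈ A, w z ≤ s z) ∧ v = s x}

/-- The lower semicontinuous regularization `R̂` of the réduite. -/
def reduiteReg {N : ℕ} (W : Set (ES N)) (w : ES N → ℝ) (A : Set (ES N)) (x : ES N) : ℝ :=
  liminf (reduite W w A) (𝓝[W] x)

/-- Nontangential approach region at `y` with aperture `κ`. -/
def ntRegion {N : ℕ} (Ω : Set (ES N)) (y : ES N) (κ : ℝ) : Set (ES N) :=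
  {x | x ∈ Ω ∧ dist x y ≤ κ * dista Ω x}

/-- `g` tends to `l` nontangentially at `y`. -/
def TendstoNT {N : ℕ} (Ω : Set (ES N)) (g : ES N → ℝ) (y : ES N) (l : Filter ℝ) : Prop :=
  ∀ κ > (0:ℝ), Tendsto g (𝓝[ntRegion Ω y κ] y) l

/-- Truncated cone `{y + t(ν+v) : 0 < t ≤ η, ‖v‖ ≤ η}` with vertex `y`. -/
def truncCone {N : ℕ} (y ν : ES N) (η : ℝ) : Set (ES N) :=
  {x | ∃ (t : ℝ) (v : ES N), 0 < t ∧ t ≤ η ∧ ‖v‖ ≤ η ∧ x = y + t • (ν + v)}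

/-- Last coordinate of a point of `ℝ^{n+1}`. -/
def lastC {n : ℕ} (x : ES (n + 1)) : ℝ := x (Fin.last n)

/-- First `n` coordinates of a point of `ℝ^{n+1}`. -/
def firstC {n : ℕ} (x : ES (n + 1)) : ES n :=
  (EuclideanSpace.equiv (Fin n) ℝ).symm fun i => x i.castSucc

/-- The region `U_f(r,ρ) = {(x',x_N) : |x'| < r, f(x') < x_N < ρ}`. -/
def Ucyl {n : ℕ} (f : ES n → ℝ) (r ρ : ℝ) : Set (ES (n + 1)) :=
  {x | ‖firstC x‖ < r ∧ f (firstC x) < lastC x ∧ lastC x < ρ}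

/-- The cylinder `T(t) = B_{N-1}(0,tr) × (-tρ, tρ)`. -/
def Tcyl (n : ℕ) (r ρ t : ℝ) : Set (ES (n + 1)) :=
  {x | ‖firstC x‖ < t * r ∧ |lastC x| < t * ρ}

/-- The graph part `∂_#U` of the boundary of `U_f(r,ρ)`. -/
def graphBdry {n : ℕ} (f : ES n → ℝ) (r ρ : ℝ) : Set (ES (n + 1)) :=
  frontier (Ucyl f r ρ) ∩ {x | ‖firstC x‖ < r ∧ lastC x = f (firstC x)}

section
/-! ### Radial kernels -/

/-- Profile of the radial test functions. -/
def kH (s : ℝ) : ℝ := expNegInvGlue (1 - s)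

/-- Minus the derivative of `kH`. -/
def kh (s : ℝ) : ℝ := ((1 - s)⁻¹) ^ 2 * expNegInvGlue (1 - s)

/-- The derivative of `kh`. -/
def kh' (s : ℝ) : ℝ := deriv kh s

lemma kH_hasDeriv (s : ℝ) : HasDerivAt kH (-kh s) s := by
  have h := expNegInvGlue.hasDerivAt_polynomial_eval_inv_mul 1 (1 - s)
  simp only [Polynomial.eval_one, one_mul, Polynomial.derivative_one, sub_zero, mul_one,
    Polynomial.eval_pow, Polynomial.eval_X] at h
  have h2 : HasDerivAt (fun s : ℝ => 1 - s) (-1) s := by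
    simpa using (hasDerivAt_id s).const_sub 1
  have h3 : HasDerivAt (fun s => expNegInvGlue (1 - s))
      ((1 - s)⁻¹ ^ 2 * expNegInvGlue (1 - s) * (-1)) s := h.comp s h2
  exact h3.congr_deriv (by rw [kh]; ring)

lemma kH_contDiff {m : ℕ∞} : ContDiff ℝ m kH :=
  expNegInvGlue.contDiff.comp (contDiff_const.sub contDiff_id)

lemma kh_contDiff {m : ℕ∞} : ContDiff ℝ m kh := by
  have h0 : ContDiff ℝ m (fun s : ℝ => 1 - s) := contDiff_const.sub contDiff_id
  have h := (expNegInvGlue.contDiff_polynomial_eval_inv_mul (n := m) (Polynomial.X ^ 2)).comp h0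
  have e : kh = (fun x ↦ Polynomial.eval x⁻¹ (Polynomial.X ^ 2) * expNegInvGlue x) ∘
      fun s : ℝ => 1 - s := by
    funext s; simp [kh]
  rw [e]; exact h

lemma kh_hasDeriv (s : ℝ) : HasDerivAt kh (kh' s) s :=
  ((kh_contDiff (m := 1)).differentiable (by simp) s).hasDerivAt

lemma kh'_cont : Continuous kh' :=
  (kh_contDiff (m := 1)).continuous_deriv (by simp)

lemma kh_cont : Continuous kh := (kh_contDiff (m := 0)).continuous
lemma kH_cont : Continuous kH := (kH_contDiff (m := 0)).continuous

lemma kH_nonneg (s : ℝ) : 0 ≤ kH s := expNegInvGlue.nonneg _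
lemma kh_nonneg (s : ℝ) : 0 ≤ kh s := mul_nonneg (sq_nonneg _) (expNegInvGlue.nonneg _)
lemma kH_zero {s : ℝ} (h : 1 ≤ s) : kH s = 0 := expNegInvGlue.zero_of_nonpos (by linarith)
lemma kh_zero {s : ℝ} (h : 1 ≤ s) : kh s = 0 := by
  rw [kh, expNegInvGlue.zero_of_nonpos (by linarith), mul_zero]
lemma kH_pos {s : ℝ} (h : s < 1) : 0 < kH s := expNegInvGlue.pos_of_pos (by linarith)
lemma kH_le_kh {s : ℝ} (h0 : 0 ≤ s) : kH s ≤ kh s := by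
  rcases le_or_gt 1 s with h | h
  · rw [kH_zero h, kh_zero h]
  · have h1 : (1:ℝ) ≤ (1 - s)⁻¹ := (one_le_inv₀ (by linarith)).2 (by linarith)
    have : (1:ℝ) ≤ ((1 - s)⁻¹) ^ 2 := one_le_pow₀ h1
    exact le_mul_of_one_le_left (expNegInvGlue.nonneg _) this
lemma kh'_zero {s : ℝ} (h : 1 ≤ s) : kh' s = 0 := by
  have h1 : HasDerivWithinAt kh (kh' s) (Ici s) s := (kh_hasDeriv s).hasDerivWithinAt
  have h2 : HasDerivWithinAt kh 0 (Ici s) s := by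
    refine (hasDerivWithinAt_const s (Ici s) (0:ℝ)).congr (fun y hy => ?_) (kh_zero h)
    exact kh_zero (le_trans h hy)
  exact (uniqueDiffOn_Ici s s self_mem_Ici).eq_deriv _ h1 h2
lemma kH_anti : Antitone kH := fun a b hab => expNegInvGlue.monotone (by linarith)

lemma kh_bdd : ∃ B : ℝ, 0 < B ∧ ∀ s, 0 ≤ s → kh s ≤ B := by
  obtain ⟨C, hC⟩ := (isCompact_Icc (a := (0:ℝ)) (b := 1)).exists_bound_of_continuousOn
    kh_cont.continuousOn
  refine ⟨|C| + 1, by positivity, fun s hs => ?_⟩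
  rcases le_or_gt s 1 with h | h
  · have := hC s ⟨hs, h⟩
    have := (le_abs_self (kh s)).trans this
    linarith [le_abs_self C]
  · rw [kh_zero h.le]; positivity

variable {N : ℕ}

/-! ### Laplacian of radial functions -/

lemma hasFDerivAt_radial {G G1 : ℝ → ℝ} (h1 : ∀ s, HasDerivAt G (G1 s) s) (x z : ES N) :
    HasFDerivAt (fun z => G (‖z - x‖ ^ 2))
      (G1 (‖z - x‖ ^ 2) • ((2:ℝ) • (innerSL ℝ (z - x)))) z := by
  have hn : HasFDerivAt (fun z : ES N => ‖z - x‖ ^ 2) ((2:ℝ) • (innerSL ℝ (z - x))) z := by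
    have := ((hasFDerivAt_id z).sub_const x).norm_sq
    refine this.congr_fderiv ?_
    ext; simp
  exact (h1 _).comp_hasFDerivAt z hn

lemma lap_radial {G G1 G2 : ℝ → ℝ} (h1 : ∀ s, HasDerivAt G (G1 s) s)
    (h2 : ∀ s, HasDerivAt G1 (G2 s) s) (x z : ES N) :
    lap (fun z => G (‖z - x‖ ^ 2)) z
      = 4 * ‖z - x‖ ^ 2 * G2 (‖z - x‖ ^ 2) + 2 * N * G1 (‖z - x‖ ^ 2) := by
  have key : ∀ i : Fin N, fderiv ℝ (fun y => fderiv ℝ (fun z => G (‖z - x‖ ^ 2)) y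
      (EuclideanSpace.single i 1)) z (EuclideanSpace.single i 1)
      = 4 * (z - x) i ^ 2 * G2 (‖z - x‖ ^ 2) + 2 * G1 (‖z - x‖ ^ 2) := by
    intro i
    have e1 : (fun y => fderiv ℝ (fun z => G (‖z - x‖ ^ 2)) y (EuclideanSpace.single i 1))
        = fun y => G1 (‖y - x‖ ^ 2) * (2 * (y - x) i) := by
      funext y
      rw [(hasFDerivAt_radial h1 x y).fderiv]
      have : inner ℝ (y - x) (EuclideanSpace.single i (1:ℝ)) = (y - x) i := by
        rw [EuclideanSpace.inner_single_right]; simp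
      simp only [_root_.smul_apply, innerSL_apply_apply, this, smul_eq_mul]
    rw [e1]
    have hp : HasFDerivAt (fun y : ES N => 2 * (y - x) i)
        ((2:ℝ) • (EuclideanSpace.proj i : ES N →L[ℝ] ℝ)) z := by
      have h : HasFDerivAt (fun y : ES N => (EuclideanSpace.proj i : ES N →L[ℝ] ℝ) (y - x))
        (EuclideanSpace.proj i : ES N →L[ℝ] ℝ) z := by
        have := (EuclideanSpace.proj i : ES N →L[ℝ] ℝ).hasFDerivAt.comp z
          ((hasFDerivAt_id z).sub_const x)
        exact this
      simpa using h.const_mul (2:ℝ)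
    have h3 : HasFDerivAt (fun y => G1 (‖y - x‖ ^ 2) * (2 * (y - x) i)) _ z :=
      (hasFDerivAt_radial h2 x z).mul hp
    rw [h3.fderiv]
    have : inner ℝ (z - x) (EuclideanSpace.single i (1:ℝ)) = (z - x) i := by
      rw [EuclideanSpace.inner_single_right]; simp
    have h4 : (EuclideanSpace.proj i : ES N →L[ℝ] ℝ) (EuclideanSpace.single i (1:ℝ)) = 1 := by
      simp
    simp only [_root_.add_apply, _root_.smul_apply, innerSL_apply_apply,
      this, smul_eq_mul, h4]
    ring
  unfold lap
  rw [Finset.sum_congr rfl (fun i _ => key i), Finset.sum_add_distrib, ← Finset.sum_mul,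
    ← Finset.mul_sum, ← EuclideanSpace.real_norm_sq_eq]
  simp
  ring

/-- The radial test function at scale `t`. -/
def phiT (x : ES N) (t : ℝ) (z : ES N) : ℝ := kH (‖z - x‖ ^ 2 / t ^ 2)

/-- The averaging kernel at scale `t`. -/
def kT (x : ES N) (t : ℝ) (z : ES N) : ℝ := (t ^ N)⁻¹ * kh (‖z - x‖ ^ 2 / t ^ 2)

lemma lap_phiT (x : ES N) (t : ℝ) (z : ES N) :
    lap (phiT x t) z = (t ^ 2)⁻¹ *
      (- 4 * (‖z - x‖ ^ 2 / t ^ 2) * kh' (‖z - x‖ ^ 2 / t ^ 2)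
        - 2 * N * kh (‖z - x‖ ^ 2 / t ^ 2)) := by
  have hd : ∀ s : ℝ, HasDerivAt (fun s => s / t ^ 2) ((t ^ 2)⁻¹) s := fun s => by
    simpa using (hasDerivAt_id s).div_const (t ^ 2)
  have h1 : ∀ s, HasDerivAt (fun s => kH (s / t ^ 2)) (-kh (s / t ^ 2) * (t ^ 2)⁻¹) s := fun s =>
    (kH_hasDeriv _).comp s (hd s)
  have h2 : ∀ s, HasDerivAt (fun s => -kh (s / t ^ 2) * (t ^ 2)⁻¹)
      (-(kh' (s / t ^ 2) * (t ^ 2)⁻¹) * (t ^ 2)⁻¹) s := fun s =>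
    (((kh_hasDeriv _).comp s (hd s)).neg).mul_const _
  have := lap_radial h1 h2 x z
  unfold phiT
  rw [this]
  ring

lemma kT_hasDeriv (x z : ES N) {t : ℝ} (ht : 0 < t) :
    HasDerivAt (fun t => kT x t z) (1 / 2 * t * (t ^ N)⁻¹ * lap (phiT x t) z) t := by
  rw [lap_phiT x t]
  have ht0 : t ≠ 0 := ht.ne'
  have h1 : HasDerivAt (fun t : ℝ => (t ^ N)⁻¹) (-(N : ℝ) * (t ^ N)⁻¹ * t⁻¹) t := by
    have := (hasDerivAt_pow N t).inv (pow_ne_zero N ht0)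
    refine this.congr_deriv ?_
    rcases N with _ | m
    · simp
    · field_simp
      simp
      ring
  have h2 : HasDerivAt (fun t : ℝ => ‖z - x‖ ^ 2 / t ^ 2) (-2 * (‖z - x‖ ^ 2 / t ^ 2) * t⁻¹) t := by
    have := ((hasDerivAt_pow 2 t).inv (pow_ne_zero 2 ht0)).const_mul (‖z - x‖ ^ 2)
    refine this.congr_deriv ?_
    field_simp
    norm_num
    ring
  have h3 := h1.mul ((kh_hasDeriv _).comp t h2)
  unfold kT
  refine HasDerivAt.congr_deriv h3 ?_
  simp only [Function.comp_def]
  field_simp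
  ring

lemma phiT_nonneg (x : ES N) (t : ℝ) (z : ES N) : 0 ≤ phiT x t z := kH_nonneg _
lemma kT_nonneg (x : ES N) {t : ℝ} (ht : 0 < t) (z : ES N) : 0 ≤ kT x t z :=
  mul_nonneg (by positivity) (kh_nonneg _)

lemma phiT_contDiff (x : ES N) (t : ℝ) : ContDiff ℝ (⊤ : ℕ∞) (phiT x t) := by
  unfold phiT
  exact kH_contDiff.comp (((contDiff_id.sub contDiff_const).norm_sq ℝ).div_const _)

lemma one_le_ratio {x z : ES N} {t : ℝ} (ht : 0 < t) (h : t ≤ ‖z - x‖) :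
    1 ≤ ‖z - x‖ ^ 2 / t ^ 2 := by
  rw [le_div_iff₀ (by positivity), one_mul]
  exact pow_le_pow_left₀ ht.le h 2

lemma phiT_zero {x z : ES N} {t : ℝ} (ht : 0 < t) (h : t ≤ ‖z - x‖) : phiT x t z = 0 :=
  kH_zero (one_le_ratio ht h)
lemma kT_zero {x z : ES N} {t : ℝ} (ht : 0 < t) (h : t ≤ ‖z - x‖) : kT x t z = 0 := by
  rw [kT, kh_zero (one_le_ratio ht h), mul_zero]

lemma tsupport_sub_of_zero {χ : ES N → ℝ} {x : ES N} {t : ℝ}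
    (h : ∀ z, t ≤ ‖z - x‖ → χ z = 0) : tsupport χ ⊆ closedBall x t := by
  refine closure_minimal (fun z hz => ?_) isClosed_closedBall
  by_contra hc
  rw [mem_closedBall, dist_eq_norm, not_le] at hc
  exact hz (h z hc.le)

lemma phiT_test (x : ES N) {t R : ℝ} (ht : 0 < t) (hR : t < R) :
    IsTestFun (ball x R) (phiT x t) := by
  have h := tsupport_sub_of_zero (fun z => phiT_zero (x := x) (z := z) ht)
  exact ⟨phiT_contDiff x t, (isCompact_closedBall x t).of_isClosed_subset (isClosed_tsupport _) h,
    h.trans (closedBall_subset_ball hR)⟩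

lemma kT_cont (x : ES N) (t : ℝ) : Continuous (kT x t) := by
  unfold kT
  exact continuous_const.mul (kh_cont.comp (by fun_prop))

lemma phiT_le_kT (x : ES N) {t : ℝ} (ht : 0 < t) (z : ES N) :
    (t ^ N)⁻¹ * phiT x t z ≤ kT x t z :=
  mul_le_mul_of_nonneg_left (kH_le_kh (by positivity)) (by positivity)

/-- total mass of the kernel -/
def m0 (N : ℕ) : ℝ := ∫ z : ES N, kT 0 1 z

lemma integral_kT (x : ES N) {t : ℝ} (ht : 0 < t) : ∫ z, kT x t z = m0 N := by
  have h1 : ∀ z, kT x t z = (t ^ N)⁻¹ * (kT 0 1 (t⁻¹ • (z - x))) := by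
    intro z
    simp [kT, norm_smul, mul_pow, div_eq_inv_mul]
  simp_rw [h1]
  rw [integral_const_mul, integral_sub_right_eq_self (fun z => kT (0 : ES N) 1 (t⁻¹ • z)),
    Measure.integral_comp_inv_smul_of_nonneg _ _ ht.le]
  simp [m0]
  field_simp

lemma kT_hcs (x : ES N) {t : ℝ} (ht : 0 < t) : HasCompactSupport (kT x t) :=
  (isCompact_closedBall x t).of_isClosed_subset (isClosed_tsupport _)
    (tsupport_sub_of_zero (fun z => kT_zero (x := x) (z := z) ht))

lemma kT_integrable (x : ES N) {t : ℝ} (ht : 0 < t) : Integrable (kT x t) :=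
  (kT_cont x t).integrable_of_hasCompactSupport (kT_hcs x ht)

lemma m0_pos (N : ℕ) : 0 < m0 N := by
  refine (kT_cont 0 1).integral_pos_of_hasCompactSupport_nonneg_nonzero (kT_hcs 0 one_pos)
    (kT_nonneg 0 one_pos) (x := 0) ?_
  have : 0 < kh 0 := lt_of_lt_of_le (kH_pos one_pos) (kH_le_kh le_rfl)
  simp [kT, this.ne']

lemma lap_zero_off {φ : ES N → ℝ} {z : ES N} (hz : z ∉ tsupport φ) : lap φ z = 0 := by
  unfold lap
  refine Finset.sum_eq_zero fun i _ => ?_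
  have h : (fun y => fderiv ℝ φ y (EuclideanSpace.single i 1)) =ᶠ[𝓝 z] fun _ => 0 := by
    have : φ =ᶠ[𝓝 z] 0 := notMem_tsupport_iff_eventuallyEq.1 hz
    have h2 := this.fderiv (𝕜 := ℝ)
    filter_upwards [h2] with y hy
    rw [hy]; simp
  rw [h.fderiv_eq]
  simp

lemma contDiff_fd {φ : ES N → ℝ} (h : ContDiff ℝ (⊤ : ℕ∞) φ) (v : ES N) :
    ContDiff ℝ (⊤ : ℕ∞) (fun y => fderiv ℝ φ y v) :=
  (h.fderiv_right (m := (⊤ : ℕ∞)) (by simp)).clm_apply contDiff_const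

lemma lap_cont {φ : ES N → ℝ} (h : ContDiff ℝ (⊤ : ℕ∞) φ) : Continuous (lap φ) := by
  unfold lap
  exact continuous_finsetSum _ fun i _ => (contDiff_fd (contDiff_fd h _) _).continuous

/-- `∫ E Δφ = ∫ ΔE φ`. -/
lemma ibp {E φ : ES N → ℝ} (hE : ContDiff ℝ (⊤ : ℕ∞) E) (hφ : ContDiff ℝ (⊤ : ℕ∞) φ)
    (hc : HasCompactSupport φ) : ∫ z, E z * lap φ z = ∫ z, lap E z * φ z := by
  have one : ∀ (F χ : ES N → ℝ) (v : ES N), ContDiff ℝ (⊤ : ℕ∞) F → ContDiff ℝ (⊤ : ℕ∞) χ →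
      HasCompactSupport χ → ∫ z, F z * fderiv ℝ χ z v = - ∫ z, fderiv ℝ F z v * χ z := by
    intro F χ v hF hχ hχc
    refine integral_mul_fderiv_eq_neg_fderiv_mul_of_integrable ?_ ?_ ?_ ?_ ?_
    · exact ((contDiff_fd hF v).continuous.mul hχ.continuous).integrable_of_hasCompactSupport
        hχc.mul_left
    · exact (hF.continuous.mul (contDiff_fd hχ v).continuous).integrable_of_hasCompactSupport
        (hχc.fderiv_apply ℝ v).mul_left
    · exact (hF.continuous.mul hχ.continuous).integrable_of_hasCompactSupport hχc.mul_left
    · exact fun z _ => hF.differentiable (by simp) z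
    · exact fun z _ => hχ.differentiable (by simp) z
  unfold lap
  simp_rw [Finset.mul_sum, Finset.sum_mul]
  rw [integral_finsetSum, integral_finsetSum]
  · refine Finset.sum_congr rfl fun i _ => ?_
    set e : ES N := EuclideanSpace.single i 1
    rw [one E (fun y => fderiv ℝ φ y e) e hE (contDiff_fd hφ e) (hc.fderiv_apply ℝ e),
      one (fun y => fderiv ℝ E y e) φ e (contDiff_fd hE e) hφ hc, neg_neg]
  · intro i _
    exact ((contDiff_fd (contDiff_fd hE _) _).continuous.mul
      hφ.continuous).integrable_of_hasCompactSupport hc.mul_left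
  · intro i _
    exact (hE.continuous.mul (contDiff_fd (contDiff_fd hφ _) _).continuous
      ).integrable_of_hasCompactSupport ((hc.fderiv_apply ℝ _).fderiv_apply ℝ _).mul_left
end

section
variable {N : ℕ}

/-! ### Weighted means -/

/-- The weighted mean of `g` around `x` at scale `t`. -/
def Mn (g : ES N → ℝ) (x : ES N) (t : ℝ) : ℝ := ∫ z, g z * kT x t z

lemma cont_mul {g χ : ES N → ℝ} {D : Set (ES N)} (hD : IsOpen D) (hg : ContinuousOn g D)
    (hχ : Continuous χ) (hs : tsupport χ ⊆ D) : Continuous (fun z => g z * χ z) := by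
  refine continuous_of_tsupport fun z hz => ?_
  have hz' : z ∈ D := hs (closure_mono (fun y hy => by
    rw [Function.mem_support] at hy ⊢
    exact right_ne_zero_of_mul hy) hz)
  exact (hg.continuousAt (hD.mem_nhds hz')).mul hχ.continuousAt

lemma int_mul {g χ : ES N → ℝ} {D : Set (ES N)} (hD : IsOpen D) (hg : ContinuousOn g D)
    (hχ : Continuous χ) (hc : HasCompactSupport χ) (hs : tsupport χ ⊆ D) :
    Integrable (fun z => g z * χ z) :=
  (cont_mul hD hg hχ hs).integrable_of_hasCompactSupport hc.mul_left

lemma tsupport_lap (φ : ES N → ℝ) : tsupport (lap φ) ⊆ tsupport φ :=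
  closure_minimal (fun z hz => by
    by_contra h
    exact hz (lap_zero_off h)) (isClosed_tsupport _)

lemma int_lap {g φ : ES N → ℝ} {D : Set (ES N)} (hD : IsOpen D) (hg : ContinuousOn g D)
    (hφ : IsTestFun D φ) : Integrable (fun z => g z * lap φ z) :=
  int_mul hD hg (lap_cont hφ.1) (hφ.2.1.of_isClosed_subset (isClosed_tsupport _) (tsupport_lap φ))
    ((tsupport_lap φ).trans hφ.2.2)

lemma int_test {g φ : ES N → ℝ} {D : Set (ES N)} (hD : IsOpen D) (hg : ContinuousOn g D)
    (hφ : IsTestFun D φ) : Integrable (fun z => g z * φ z) :=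
  int_mul hD hg hφ.1.continuous hφ.2.1 hφ.2.2

lemma int_kT {g : ES N → ℝ} {x : ES N} {R t : ℝ} (hg : ContinuousOn g (ball x R)) (ht : 0 < t)
    (htR : t < R) : Integrable (fun z => g z * kT x t z) :=
  int_mul isOpen_ball hg (kT_cont x t) (kT_hcs x ht)
    ((tsupport_sub_of_zero (fun z => kT_zero (x := x) (z := z) ht)).trans
      (closedBall_subset_ball htR))

lemma Mn_hasDeriv {g : ES N → ℝ} {x : ES N} {R t : ℝ} (hg : ContinuousOn g (ball x R))
    (ht : 0 < t) (htR : t < R) :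
    HasDerivAt (Mn g x) (1 / 2 * t * (t ^ N)⁻¹ * ∫ z, g z * lap (phiT x t) z) t := by
  set t1 : ℝ := (t + R) / 2 with ht1
  have h1 : t < t1 := by rw [ht1]; linarith
  have h2 : t1 < R := by rw [ht1]; linarith
  set D : ℝ → ES N → ℝ := fun τ z => 1 / 2 * τ * (τ ^ N)⁻¹ * lap (phiT x τ) z with hDdef
  obtain ⟨C, hC⟩ : ∃ C, ∀ p ∈ Icc (t / 2) t1 ×ˢ closedBall x t1, ‖D p.1 p.2‖ ≤ C := by
    have hc : ContinuousOn (fun p : ℝ × ES N => D p.1 p.2) (Icc (t / 2) t1 ×ˢ closedBall x t1) := by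
      simp only [hDdef, lap_phiT]
      have hne : ∀ p ∈ Icc (t / 2) t1 ×ˢ closedBall x t1, p.1 ≠ 0 := fun p hp => by
        have := hp.1.1; intro h; rw [h] at this; linarith
      have hq : ContinuousOn (fun p : ℝ × ES N => ‖p.2 - x‖ ^ 2 / p.1 ^ 2)
          (Icc (t / 2) t1 ×ˢ closedBall x t1) :=
        ContinuousOn.div (by fun_prop) (by fun_prop) fun p hp => pow_ne_zero 2 (hne p hp)
      have hi : ∀ m : ℕ, ContinuousOn (fun p : ℝ × ES N => (p.1 ^ m)⁻¹)
          (Icc (t / 2) t1 ×ˢ closedBall x t1) := fun m =>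
        ContinuousOn.inv₀ (by fun_prop) fun p hp => pow_ne_zero m (hne p hp)
      refine ContinuousOn.mul (ContinuousOn.mul (by fun_prop) (hi N)) ((hi 2).mul ?_)
      exact ((continuousOn_const.mul hq).mul (kh'_cont.comp_continuousOn hq)).sub
        (continuousOn_const.mul (kh_cont.comp_continuousOn hq))
    exact (isCompact_Icc.prod (isCompact_closedBall x t1)).exists_bound_of_continuousOn hc
  have key := hasDerivAt_integral_of_dominated_loc_of_deriv_le (μ := volume)
    (F := fun τ z => g z * kT x τ z) (F' := fun τ z => g z * D τ z) (x₀ := t)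
    (s := Ioo (t / 2) t1) (bound := indicator (closedBall x t1) fun z => |g z| * C)
    (Ioo_mem_nhds (by linarith) h1) ?_ ?_ ?_ ?_ ?_ ?_
  · have := key.2
    have e : ∫ z, g z * D t z = 1 / 2 * t * (t ^ N)⁻¹ * ∫ z, g z * lap (phiT x t) z := by
      rw [← integral_const_mul]
      refine integral_congr_ae (Eventually.of_forall fun z => ?_)
      simp only [hDdef]; ring
    rw [← e]
    exact this
  · filter_upwards [Ioo_mem_nhds (show t / 2 < t by linarith) h1] with τ hτ
    exact (int_kT hg (by linarith [hτ.1]) (by linarith [hτ.2])).aestronglyMeasurable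
  · exact int_kT hg ht htR
  · have := (int_lap isOpen_ball hg (phiT_test x ht htR)).const_mul (1 / 2 * t * (t ^ N)⁻¹)
    refine (this.congr (Eventually.of_forall fun z => ?_)).aestronglyMeasurable
    simp only [hDdef]; ring
  · refine Eventually.of_forall fun z τ hτ => ?_
    by_cases hz : z ∈ closedBall x t1
    · rw [indicator_of_mem hz, norm_mul]
      exact mul_le_mul_of_nonneg_left (hC (τ, z) ⟨⟨hτ.1.le, hτ.2.le⟩, hz⟩) (norm_nonneg _)
    · rw [indicator_of_notMem hz]
      have h0 : lap (phiT x τ) z = 0 := by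
        refine lap_zero_off fun h => hz ?_
        exact closedBall_subset_closedBall hτ.2.le
          (tsupport_sub_of_zero (fun z => phiT_zero (x := x) (z := z) (by linarith [hτ.1])) h)
      simp [hDdef, h0]
  · rw [integrable_indicator_iff measurableSet_closedBall]
    exact (((hg.mono (closedBall_subset_ball h2)).abs).mul continuousOn_const).integrableOn_compact
      (isCompact_closedBall x t1)
  · refine Eventually.of_forall fun z τ hτ => ?_
    exact (kT_hasDeriv x z (by linarith [hτ.1])).const_mul (g z)

lemma Mn_ge {g : ES N → ℝ} {x : ES N} {R t c : ℝ} (hg : ContinuousOn g (ball x R)) (ht : 0 < t)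
    (htR : t < R) (hc : ∀ z ∈ ball x t, c ≤ g z) : c * m0 N ≤ Mn g x t := by
  rw [← integral_kT x ht, ← integral_const_mul]
  refine integral_mono ((kT_integrable x ht).const_mul c) (int_kT hg ht htR) fun z => ?_
  by_cases hz : z ∈ ball x t
  · exact mul_le_mul_of_nonneg_right (hc z hz) (kT_nonneg x ht z)
  · rw [mem_ball, dist_eq_norm, not_lt] at hz
    simp [kT_zero ht hz]

lemma Mn_le {g : ES N → ℝ} {x : ES N} {R t c : ℝ} (hg : ContinuousOn g (ball x R)) (ht : 0 < t)
    (htR : t < R) (hc : ∀ z ∈ ball x t, g z ≤ c) : Mn g x t ≤ c * m0 N := by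
  rw [← integral_kT x ht, ← integral_const_mul]
  refine integral_mono (int_kT hg ht htR) ((kT_integrable x ht).const_mul c) fun z => ?_
  by_cases hz : z ∈ ball x t
  · exact mul_le_mul_of_nonneg_right (hc z hz) (kT_nonneg x ht z)
  · rw [mem_ball, dist_eq_norm, not_lt] at hz
    simp [kT_zero ht hz]

/-- a small radius on which `g` is close to `g x` -/
lemma small_radius {g : ES N → ℝ} {x : ES N} {R t ε : ℝ} (hg : ContinuousOn g (ball x R))
    (ht : 0 < t) (htR : t < R) (hε : 0 < ε) :
    ∃ τ, 0 < τ ∧ τ < t ∧ ∀ z ∈ ball x τ, |g z - g x| ≤ ε := by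
  have hcx : ContinuousAt g x := hg.continuousAt (ball_mem_nhds x (ht.trans htR))
  obtain ⟨η, hη, h⟩ := Metric.continuousAt_iff.1 hcx ε hε
  refine ⟨min η (t / 2), by positivity, (min_le_right _ _).trans_lt (by linarith), fun z hz => ?_⟩
  have := h (lt_of_lt_of_le (mem_ball.1 hz) (min_le_left _ _))
  rw [Real.dist_eq] at this
  exact this.le

/-- Sub-mean inequality, strict version included. -/
lemma sub_mean {g : ES N → ℝ} {x : ES N} {R t : ℝ} (hg : ContinuousOn g (ball x R))
    (ht : 0 < t) (htR : t < R)
    (hw : ∀ φ, IsTestFun (ball x R) φ → (∀ z, 0 ≤ φ z) → 0 ≤ ∫ z, g z * lap φ z) :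
    g x * m0 N ≤ Mn g x t := by
  have hmono : MonotoneOn (Mn g x) (Ioo 0 R) := by
    refine monotoneOn_of_deriv_nonneg (convex_Ioo 0 R)
      (fun τ hτ => (Mn_hasDeriv hg hτ.1 hτ.2).continuousAt.continuousWithinAt)
      (fun τ hτ => ?_) (fun τ hτ => ?_)
    · rw [interior_Ioo] at hτ
      exact (Mn_hasDeriv hg hτ.1 hτ.2).differentiableAt.differentiableWithinAt
    · rw [interior_Ioo] at hτ
      rw [(Mn_hasDeriv hg hτ.1 hτ.2).deriv]
      have := hτ.1
      exact mul_nonneg (by positivity) (hw _ (phiT_test x hτ.1 hτ.2) (phiT_nonneg x τ))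
  refine le_of_forall_pos_le_add fun ε hε => ?_
  obtain ⟨τ, hτ, hτt, h⟩ := small_radius hg ht htR (div_pos hε (m0_pos N))
  have h1 := Mn_ge (c := g x - ε / m0 N) hg hτ (hτt.trans htR) (fun z hz => by
    have := abs_le.1 (h z hz); linarith)
  have h2 := hmono ⟨hτ, hτt.trans htR⟩ ⟨ht, htR⟩ hτt.le
  have h3 : (g x - ε / m0 N) * m0 N = g x * m0 N - ε := by
    have := (m0_pos N).ne'
    field_simp
  linarith

lemma sub_mean_strict {g : ES N → ℝ} {x : ES N} {R c : ℝ} (hg : ContinuousOn g (ball x R))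
    (hR : 0 < R) (hc : 0 < c)
    (hw : ∀ φ, IsTestFun (ball x R) φ → (∀ z, 0 ≤ φ z) → c * ∫ z, φ z ≤ ∫ z, g z * lap φ z) :
    ∃ z ∈ ball x R, g x < g z := by
  by_contra hcon
  push Not at hcon
  have hphi : ∀ τ, 0 < τ → 0 < ∫ z, phiT x τ z := fun τ hτ => by
    have ht := phiT_test x hτ (lt_add_one τ)
    refine ht.1.continuous.integral_pos_of_hasCompactSupport_nonneg_nonzero ht.2.1
      (phiT_nonneg x τ) (x := x) ?_
    have : 0 < phiT x τ x := kH_pos (by simp)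
    exact this.ne'
  have hmono : StrictMonoOn (Mn g x) (Ioo 0 R) := by
    refine strictMonoOn_of_deriv_pos (convex_Ioo 0 R)
      (fun τ hτ => (Mn_hasDeriv hg hτ.1 hτ.2).continuousAt.continuousWithinAt)
      (fun τ hτ => ?_)
    rw [interior_Ioo] at hτ
    rw [(Mn_hasDeriv hg hτ.1 hτ.2).deriv]
    have h0 := hτ.1
    exact mul_pos (by positivity) (lt_of_lt_of_le (mul_pos hc (hphi τ h0))
      (hw _ (phiT_test x hτ.1 hτ.2) (phiT_nonneg x τ)))
  have h1 := hmono ⟨(by linarith : 0 < R / 3), by linarith⟩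
    ⟨(by linarith : 0 < R / 2), by linarith⟩ (by linarith)
  have h2 := sub_mean hg (t := R / 3) (by linarith) (by linarith) (fun φ h1 h2 =>
    (mul_nonneg hc.le (integral_nonneg h2)).trans (hw φ h1 h2))
  have h3 := Mn_le (c := g x) hg (t := R / 2) (by linarith) (by linarith) (fun z hz =>
    hcon z (ball_subset_ball (by linarith) hz))
  linarith

/-- Super-mean inequality with a zeroth order term. -/
lemma super_mean {g : ES N → ℝ} {x : ES N} {R t l : ℝ} (hg : ContinuousOn g (ball x R))
    (ht : 0 < t) (htR : t < R) (hl : 0 ≤ l) (hpos : ∀ z ∈ ball x R, 0 ≤ g z)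
    (hw : ∀ φ, IsTestFun (ball x R) φ → (∀ z, 0 ≤ φ z) →
      ∫ z, g z * lap φ z ≤ l * ∫ z, g z * φ z) :
    Mn g x t ≤ Real.exp (l * t ^ 2 / 4) * (g x * m0 N) := by
  have hD : ∀ τ ∈ Ioo 0 R, HasDerivAt (fun τ => Mn g x τ * Real.exp (-(l * τ ^ 2 / 4)))
      ((1 / 2 * τ * (τ ^ N)⁻¹ * ∫ z, g z * lap (phiT x τ) z) * Real.exp (-(l * τ ^ 2 / 4))
        + Mn g x τ * (Real.exp (-(l * τ ^ 2 / 4)) * (-(l * τ / 2)))) τ := by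
    intro τ hτ
    refine (Mn_hasDeriv hg hτ.1 hτ.2).mul (HasDerivAt.exp ?_)
    have := (((hasDerivAt_pow 2 τ).const_mul l).div_const 4).neg
    refine this.congr_deriv ?_
    norm_num
    ring
  have hanti : AntitoneOn (fun τ => Mn g x τ * Real.exp (-(l * τ ^ 2 / 4))) (Ioo 0 R) := by
    refine antitoneOn_of_deriv_nonpos (convex_Ioo 0 R)
      (fun τ hτ => (hD τ hτ).continuousAt.continuousWithinAt)
      (fun τ hτ => ?_) (fun τ hτ => ?_)
    · rw [interior_Ioo] at hτ
      exact (hD τ hτ).differentiableAt.differentiableWithinAt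
    · rw [interior_Ioo] at hτ
      rw [(hD τ hτ).deriv]
      have h0 := hτ.1
      have h1 := hw _ (phiT_test x hτ.1 hτ.2) (phiT_nonneg x τ)
      have h2 : (τ ^ N)⁻¹ * ∫ z, g z * phiT x τ z ≤ Mn g x τ := by
        rw [← integral_const_mul]
        refine integral_mono ((int_test isOpen_ball hg (phiT_test x hτ.1 hτ.2)).const_mul _)
          (int_kT hg hτ.1 hτ.2) fun z => ?_
        by_cases hz : z ∈ ball x R
        · have := mul_le_mul_of_nonneg_left (phiT_le_kT x h0 z) (hpos z hz)
          calc _ = g z * ((τ ^ N)⁻¹ * phiT x τ z) := by ring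
            _ ≤ _ := this
        · rw [mem_ball, dist_eq_norm, not_lt] at hz
          simp [kT_zero h0 (hτ.2.le.trans hz), phiT_zero h0 (hτ.2.le.trans hz)]
      have h3 : (1 / 2 * τ * (τ ^ N)⁻¹ * ∫ z, g z * lap (phiT x τ) z) ≤ Mn g x τ * (l * τ / 2) := by
        calc _ ≤ 1 / 2 * τ * (τ ^ N)⁻¹ * (l * ∫ z, g z * phiT x τ z) :=
              mul_le_mul_of_nonneg_left h1 (by positivity)
          _ = (l * τ / 2) * ((τ ^ N)⁻¹ * ∫ z, g z * phiT x τ z) := by ring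
          _ ≤ (l * τ / 2) * Mn g x τ := mul_le_mul_of_nonneg_left h2 (by positivity)
          _ = _ := by ring
      have h4 := mul_le_mul_of_nonneg_right h3 (Real.exp_pos (-(l * τ ^ 2 / 4))).le
      linarith
  have hMt : ∀ ε > 0, Mn g x t * Real.exp (-(l * t ^ 2 / 4)) ≤ g x * m0 N + ε := by
    intro ε hε
    obtain ⟨τ, hτ, hτt, h⟩ := small_radius hg ht htR (div_pos hε (m0_pos N))
    have h1 := Mn_le (c := g x + ε / m0 N) hg hτ (hτt.trans htR) (fun z hz => by
      have := abs_le.1 (h z hz); linarith)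
    have h2 := hanti ⟨hτ, hτt.trans htR⟩ ⟨ht, htR⟩ hτt.le
    have h3 : (g x + ε / m0 N) * m0 N = g x * m0 N + ε := by
      have := (m0_pos N).ne'
      field_simp
    have h0 : 0 ≤ Mn g x τ := by
      have := Mn_ge (c := 0) hg hτ (hτt.trans htR) (fun z hz =>
        hpos z (ball_subset_ball (hτt.trans htR).le hz))
      simpa using this
    have h5 : Real.exp (-(l * τ ^ 2 / 4)) ≤ 1 := Real.exp_le_one_iff.2 (by
      have : 0 ≤ l * τ ^ 2 / 4 := by positivity
      linarith)
    have h6 : Mn g x τ * Real.exp (-(l * τ ^ 2 / 4)) ≤ Mn g x τ := mul_le_of_le_one_right h0 h5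
    simp only at h2
    linarith
  have h7 := le_of_forall_pos_le_add hMt
  rw [Real.exp_neg, ← div_eq_mul_inv, div_le_iff₀ (Real.exp_pos _)] at h7
  linarith

/-- mass of a subball under the kernel -/
lemma Mn_ge_sub {g : ES N → ℝ} {x p : ES N} {R t s c : ℝ} (hg : ContinuousOn g (ball x R))
    (ht : 0 < t) (htR : t < R) (hs : 0 < s) (hpos : ∀ z ∈ ball x t, 0 ≤ g z)
    (hsub : ball p s ⊆ ball x (3 / 4 * t)) (hc0 : 0 ≤ c) (hc : ∀ z ∈ ball p s, c ≤ g z) :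
    c * (kH (9 / 16) * (t ^ N)⁻¹ * (s ^ N * volume.real (ball (0 : ES N) 1))) ≤ Mn g x t := by
  have hv : volume.real (ball p s) = s ^ N * volume.real (ball (0 : ES N) 1) := by
    rw [Measure.real, Measure.addHaar_ball_of_pos _ _ hs]
    simp [ENNReal.toReal_mul, ENNReal.toReal_ofReal (pow_nonneg hs.le N), Measure.real]
  have e : c * (kH (9 / 16) * (t ^ N)⁻¹ * (s ^ N * volume.real (ball (0 : ES N) 1)))
      = ∫ z, (ball p s).indicator (fun _ => c * (kH (9 / 16) * (t ^ N)⁻¹)) z := by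
    rw [integral_indicator measurableSet_ball, setIntegral_const, hv, smul_eq_mul]
    ring
  rw [e]
  refine integral_mono ?_ (int_kT hg ht htR) fun z => ?_
  · rw [integrable_indicator_iff measurableSet_ball]
    exact integrableOn_const (measure_ball_lt_top.ne)
  · by_cases hz : z ∈ ball p s
    · rw [indicator_of_mem hz]
      have h1 := hsub hz
      rw [mem_ball, dist_eq_norm] at h1
      have h2 : kH (9 / 16) * (t ^ N)⁻¹ ≤ kT x t z := by
        rw [kT, mul_comm]
        refine mul_le_mul_of_nonneg_left ?_ (by positivity)
        refine (kH_anti ?_).trans (kH_le_kh (by positivity))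
        rw [div_le_iff₀ (by positivity)]
        have := pow_le_pow_left₀ (norm_nonneg _) h1.le 2
        nlinarith
      exact mul_le_mul (hc z hz) h2 (mul_nonneg (kH_nonneg _) (by positivity))
        (hc0.trans (hc z hz))
    · rw [indicator_of_notMem hz]
      by_cases hz2 : z ∈ ball x t
      · exact mul_nonneg (hpos z hz2) (kT_nonneg x ht z)
      · rw [mem_ball, dist_eq_norm, not_lt] at hz2
        simp [kT_zero ht hz2]

/-- The mean of a nonnegative function around `y` is controlled by a mean around `x`. -/
lemma Mn_compare {g : ES N → ℝ} {x y : ES N} {R t : ℝ} (hg : ContinuousOn g (ball x R))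
    (ht : 0 < t) (htR : t < R) (hpos : ∀ z ∈ ball x t, 0 ≤ g z) (hxy : dist y x ≤ t / 2)
    {B : ℝ} (hB : ∀ s, 0 ≤ s → kh s ≤ B) :
    Mn g y (t / 4) ≤ 4 ^ N * B / kH (9 / 16) * Mn g x t := by
  have hsub : ball y (t / 4) ⊆ ball x (3 / 4 * t) := by
    intro z hz
    rw [mem_ball] at hz ⊢
    linarith [dist_triangle z y x]
  have hK : 0 < kH (9 / 16) := kH_pos (by norm_num)
  have hgy : ContinuousOn g (ball y (t / 2)) := hg.mono fun z hz => by
    rw [mem_ball] at hz ⊢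
    linarith [dist_triangle z y x]
  rw [Mn, Mn, ← integral_const_mul]
  refine integral_mono (int_kT hgy (by linarith) (by linarith))
    ((int_kT hg ht htR).const_mul _) fun z => ?_
  by_cases hz : z ∈ ball y (t / 4)
  · have h1 := hsub hz
    have h0 := hpos z (ball_subset_ball (by linarith) h1)
    rw [mem_ball, dist_eq_norm] at h1
    have hk : kH (9 / 16) ≤ kh (‖z - x‖ ^ 2 / t ^ 2) := by
      refine (kH_anti ?_).trans (kH_le_kh (by positivity))
      rw [div_le_iff₀ (by positivity)]
      have := pow_le_pow_left₀ (norm_nonneg _) h1.le 2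
      nlinarith
    have h2 : kT y (t / 4) z ≤ 4 ^ N * B / kH (9 / 16) * kT x t z := by
      have hB' := hB (‖z - y‖ ^ 2 / (t / 4) ^ 2) (by positivity)
      have hB0 : 0 ≤ B := (kh_nonneg _).trans hB'
      calc kT y (t / 4) z ≤ ((t / 4) ^ N)⁻¹ * B :=
            mul_le_mul_of_nonneg_left hB' (by positivity)
        _ = (4 ^ N * B / kH (9 / 16)) * ((t ^ N)⁻¹ * kH (9 / 16)) := by
            rw [div_pow]; field_simp
        _ ≤ _ := mul_le_mul_of_nonneg_left
            (mul_le_mul_of_nonneg_left hk (by positivity)) (by positivity)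
    calc g z * kT y (t / 4) z ≤ g z * (4 ^ N * B / kH (9 / 16) * kT x t z) :=
          mul_le_mul_of_nonneg_left h2 h0
      _ = _ := by ring
  · rw [mem_ball, dist_eq_norm, not_lt] at hz
    have hB0 : 0 ≤ B := (kh_nonneg _).trans (hB 0 le_rfl)
    simp only [kT_zero (by linarith : 0 < t / 4) hz, mul_zero]
    by_cases hz2 : z ∈ ball x t
    · exact mul_nonneg (by positivity) (mul_nonneg (hpos z hz2) (kT_nonneg x ht z))
    · rw [mem_ball, dist_eq_norm, not_lt] at hz2
      simp [kT_zero ht hz2]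
end

section
variable {N : ℕ}

set_option maxHeartbeats 1000000 in
/-- One step decay near a point with an exterior ball. -/
lemma decay (hN : 0 < N) {κ : ℝ} (hκ : 0 < κ) (hκ1 : κ < 1) :
    ∃ θ : ℝ, 0 < θ ∧ θ < 1 ∧ ∀ (b : ES N) (η : ℝ) (g : ES N → ℝ) (S : ℝ), 0 < η → 0 ≤ S →
      ContinuousOn g (closedBall b (4 * η)) →
      (∀ z ∈ closedBall b (κ * η), g z = 0) →
      (∀ z ∈ closedBall b (4 * η), g z ≤ S) →
      (∀ z ∈ ball b (4 * η), 0 < g z → ∃ ε > 0,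
        ∀ φ, IsTestFun (ball z ε) φ → (∀ y, 0 ≤ φ y) → 0 ≤ ∫ y, g y * lap φ y) →
      ∀ x, dist x b ≤ 2 * η → g x ≤ (1 - θ) * S := by
  have hN' : (0:ℝ) < N := by exact_mod_cast hN
  set k : ℝ := N / κ ^ 2 with hk
  have hkpos : 0 < k := by positivity
  have hkκ : k * κ ^ 2 = N := by rw [hk]; field_simp
  set ek := Real.exp (-(k * κ ^ 2)) with hek
  set e2 := Real.exp (-(k * 2 ^ 2)) with he2
  set e4 := Real.exp (-(k * 4 ^ 2)) with he4
  have h24 : e4 < e2 := Real.exp_lt_exp.2 (by nlinarith)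
  have hκ2 : κ ^ 2 < 1 := by nlinarith
  have hk2 : e2 < ek := Real.exp_lt_exp.2 (by nlinarith)
  have hD : 0 < ek - e4 := by linarith
  refine ⟨(e2 - e4) / (ek - e4), div_pos (by linarith) hD, (div_lt_one hD).2 (by linarith), ?_⟩
  intro b η g S hη hS hgc hg0 hgS hsub x hx
  have hθ : 1 - (e2 - e4) / (ek - e4) = (ek - e2) / (ek - e4) := by field_simp; ring
  have hθ0 : 0 ≤ (ek - e2) / (ek - e4) := div_nonneg (by linarith) hD.le
  rw [hθ]
  rcases hS.eq_or_lt with rfl | hS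
  · rw [mul_zero]
    exact hgS x (mem_closedBall.2 (by linarith))
  set q : ℝ := k / η ^ 2 with hq
  have hqpos : 0 < q := by positivity
  set E : ES N → ℝ := fun z => Real.exp (-q * ‖z - b‖ ^ 2) with hE
  have hEs : ContDiff ℝ (⊤ : ℕ∞) E :=
    Real.contDiff_exp.comp (contDiff_const.mul ((contDiff_id.sub contDiff_const).norm_sq ℝ))
  have hElap : ∀ z, lap E z = (4 * q ^ 2 * ‖z - b‖ ^ 2 - 2 * N * q) * E z := by
    intro z
    have h1 : ∀ s, HasDerivAt (fun s : ℝ => Real.exp (-q * s)) (-q * Real.exp (-q * s)) s :=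
      fun s => (((hasDerivAt_id s).const_mul (-q)).exp).congr_deriv (by simp; ring)
    have h2 : ∀ s, HasDerivAt (fun s : ℝ => -q * Real.exp (-q * s))
        (-q * (-q * Real.exp (-q * s))) s := fun s => (h1 s).const_mul _
    rw [hE, lap_radial h1 h2 b z]
    simp only
    ring
  -- values of E
  have hEval : ∀ (z : ES N) (c : ℝ), 0 ≤ c → c * η ≤ ‖z - b‖ → E z ≤ Real.exp (-(k * c ^ 2)) := by
    intro z c hc h
    refine Real.exp_le_exp.2 ?_
    have h1 : (c * η) ^ 2 ≤ ‖z - b‖ ^ 2 := pow_le_pow_left₀ (by positivity) h 2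
    have h2 : k * c ^ 2 = q * (c * η) ^ 2 := by rw [hq]; field_simp
    rw [h2]
    nlinarith
  have hEval' : ∀ (z : ES N) (c : ℝ), ‖z - b‖ ≤ c * η → Real.exp (-(k * c ^ 2)) ≤ E z := by
    intro z c h
    refine Real.exp_le_exp.2 ?_
    have h1 : ‖z - b‖ ^ 2 ≤ (c * η) ^ 2 := pow_le_pow_left₀ (norm_nonneg _) h 2
    have h2 : k * c ^ 2 = q * (c * η) ^ 2 := by rw [hq]; field_simp
    rw [h2]
    nlinarith
  set F : ES N → ℝ := fun z => (ek - e4) * g z + S * E z with hF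
  set K : Set (ES N) := closedBall b (4 * η) \ ball b (κ * η) with hK
  have hKc : IsCompact K := (isCompact_closedBall _ _).diff isOpen_ball
  have hFc : ContinuousOn F (closedBall b (4 * η)) :=
    (continuousOn_const.mul hgc).add (continuousOn_const.mul hEs.continuous.continuousOn)
  have main : ∀ z ∈ K, F z ≤ S * ek := by
    intro z0 hz0
    obtain ⟨x0, hx0, hmax⟩ := hKc.exists_isMaxOn ⟨z0, hz0⟩ (hFc.mono sdiff_subset)
    refine (hmax hz0).trans ?_
    by_contra hcon
    push Not at hcon
    have hx01 : ‖x0 - b‖ ≤ 4 * η := by rw [← dist_eq_norm]; exact hx0.1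
    have hx02 : κ * η ≤ ‖x0 - b‖ := by
      have := hx0.2; rw [mem_ball, not_lt, dist_eq_norm] at this; exact this
    have hEx0 : E x0 ≤ ek := hEval x0 κ hκ.le hx02
    have hgx0 : 0 < g x0 := by
      by_contra h
      push Not at h
      have : F x0 ≤ S * ek := by
        simp only [hF]; nlinarith
      linarith
    have hlt4 : ‖x0 - b‖ < 4 * η := by
      refine lt_of_le_of_ne hx01 fun h => ?_
      have h1 : E x0 ≤ e4 := hEval x0 4 (by norm_num) h.ge
      have h2 := hgS x0 hx0.1
      have : F x0 ≤ S * ek := by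
        simp only [hF]; nlinarith
      linarith
    have hltκ : κ * η < ‖x0 - b‖ := by
      refine lt_of_le_of_ne hx02 fun h => ?_
      have := hg0 x0 (by rw [mem_closedBall, dist_eq_norm]; exact h.ge)
      linarith
    obtain ⟨ε, hε, hw⟩ := hsub x0 (by rw [mem_ball, dist_eq_norm]; exact hlt4) hgx0
    set δ := min ε (min (4 * η - ‖x0 - b‖) (‖x0 - b‖ - κ * η)) with hδ
    have hδpos : 0 < δ := lt_min hε (lt_min (by linarith) (by linarith))
    have hδ1 : δ ≤ ε := min_le_left _ _
    have hδ2 : δ ≤ 4 * η - ‖x0 - b‖ := (min_le_right _ _).trans (min_le_left _ _)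
    have hδ3 : δ ≤ ‖x0 - b‖ - κ * η := (min_le_right _ _).trans (min_le_right _ _)
    have hballK : ball x0 δ ⊆ K := by
      intro z hz
      rw [mem_ball, dist_eq_norm] at hz
      have h1 : ‖z - b‖ ≤ ‖z - x0‖ + ‖x0 - b‖ := norm_sub_le_norm_sub_add_norm_sub z x0 b
      have h2 : ‖x0 - b‖ ≤ ‖x0 - z‖ + ‖z - b‖ := norm_sub_le_norm_sub_add_norm_sub x0 z b
      rw [norm_sub_rev x0 z] at h2
      refine ⟨?_, ?_⟩
      · rw [mem_closedBall, dist_eq_norm]; linarith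
      · rw [mem_ball, dist_eq_norm, not_lt]; linarith
    have hgb : ContinuousOn g (ball x0 δ) := hgc.mono (hballK.trans sdiff_subset)
    have hFb : ContinuousOn F (ball x0 δ) := hFc.mono (hballK.trans sdiff_subset)
    obtain ⟨z, hz, hlt⟩ := sub_mean_strict hFb hδpos
      (c := S * (2 * N * q * e4)) (by positivity) (by
        intro φ hφ hφ0
        have hφε : IsTestFun (ball x0 ε) φ :=
          ⟨hφ.1, hφ.2.1, hφ.2.2.trans (ball_subset_ball hδ1)⟩
        have i1 := int_lap isOpen_ball hgb hφ
        have i2 := int_lap isOpen_ball hEs.continuous.continuousOn hφ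
        have e1 : ∫ z, F z * lap φ z = (ek - e4) * (∫ z, g z * lap φ z)
            + S * ∫ z, E z * lap φ z := by
          rw [← integral_const_mul, ← integral_const_mul, ← integral_add (i1.const_mul _)
            (i2.const_mul _)]
          refine integral_congr_ae (Eventually.of_forall fun z => ?_)
          simp only [hF]; ring
        rw [e1, ibp hEs hφ.1 hφ.2.1]
        have h1 := mul_nonneg hD.le (hw φ hφε hφ0)
        have h2 : (2 * N * q * e4) * ∫ z, φ z ≤ ∫ z, lap E z * φ z := by
          rw [← integral_const_mul]
          refine integral_mono
            ((hφ.1.continuous.integrable_of_hasCompactSupport hφ.2.1).const_mul _)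
            (((lap_cont hEs).mul hφ.1.continuous).integrable_of_hasCompactSupport
              (HasCompactSupport.mul_left hφ.2.1)) fun z => ?_
          by_cases hz : z ∈ tsupport φ
          · have hzK := hballK (hφ.2.2 hz)
            refine mul_le_mul_of_nonneg_right ?_ (hφ0 z)
            rw [hElap z]
            have a1 : ‖z - b‖ ≤ 4 * η := by rw [← dist_eq_norm]; exact hzK.1
            have a2 : κ * η ≤ ‖z - b‖ := by
              have := hzK.2; rw [mem_ball, not_lt, dist_eq_norm] at this; exact this
            have a3 : e4 ≤ E z := hEval' z 4 a1
            have a4 : (κ * η) ^ 2 ≤ ‖z - b‖ ^ 2 := pow_le_pow_left₀ (by positivity) a2 2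
            have a5 : q * (κ * η) ^ 2 = N := by rw [← hkκ, hq]; field_simp
            have a6 : 2 * N * q ≤ 4 * q ^ 2 * ‖z - b‖ ^ 2 - 2 * N * q := by
              have : 4 * q ^ 2 * (κ * η) ^ 2 = 4 * q * N := by rw [← a5]; ring
              nlinarith [mul_le_mul_of_nonneg_left a4 (by positivity : 0 ≤ 4 * q ^ 2)]
            exact mul_le_mul a6 a3 (Real.exp_pos _).le (le_trans (by positivity) a6)
          · rw [image_eq_zero_of_notMem_tsupport hz]; simp
        have h3 := mul_le_mul_of_nonneg_left h2 hS.le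
        linarith)
    have := hmax (hballK hz)
    simp only [mem_ofPred_eq] at this
    linarith
  by_cases hxb : x ∈ closedBall b (κ * η)
  · rw [hg0 x hxb]; positivity
  · have hxK : x ∈ K := ⟨mem_closedBall.2 (by linarith), fun h => hxb (ball_subset_closedBall h)⟩
    have h1 := main x hxK
    have h2 : e2 ≤ E x := hEval' x 2 (by rw [← dist_eq_norm]; exact hx)
    rw [div_mul_eq_mul_div, le_div_iff₀ hD]
    simp only [hF] at h1
    nlinarith

/-! ### Weak solutions -/

lemma testFun_mono {D D' : Set (ES N)} (h : D ⊆ D') {φ : ES N → ℝ} (hφ : IsTestFun D φ) :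
    IsTestFun D' φ := ⟨hφ.1, hφ.2.1, hφ.2.2.trans h⟩

lemma weak_eq {U : Set (ES N)} {V v φ : ES N → ℝ} (hv : LVHarmonic U V v)
    (hφ : IsTestFun U φ) : ∫ z, v z * lap φ z = ∫ z, V z * v z * φ z := by
  have h := hv.2.2.2 φ hφ
  rwa [setIntegral_eq_integral_of_forall_compl_eq_zero,
    setIntegral_eq_integral_of_forall_compl_eq_zero] at h
  · intro z hz
    rw [image_eq_zero_of_notMem_tsupport fun h => hz (hφ.2.2 h), mul_zero]
  · intro z hz
    rw [lap_zero_off fun h => hz (hφ.2.2 h), mul_zero]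

lemma weak_nonneg {U : Set (ES N)} {V v φ : ES N → ℝ} {a : ℝ} (hV : VClass U a V)
    (hpos : ∀ z ∈ U, 0 < v z) (hφ : IsTestFun U φ) (hφ0 : ∀ z, 0 ≤ φ z) :
    0 ≤ ∫ z, V z * v z * φ z := by
  refine integral_nonneg fun z => ?_
  by_cases hz : z ∈ U
  · exact mul_nonneg (mul_nonneg (hV.2 z hz).1 (hpos z hz).le) (hφ0 z)
  · simp only [Pi.zero_apply]
    rw [image_eq_zero_of_notMem_tsupport fun h => hz (hφ.2.2 h), mul_zero]

/-- Harnack inequality. -/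
lemma harnack (N : ℕ) (a : ℝ) : ∃ C : ℝ, 1 ≤ C ∧ ∀ (U : Set (ES N)) (V v : ES N → ℝ), IsOpen U →
    Uᶜ.Nonempty → VClass U a V → LVHarmonic U V v → (∀ z ∈ U, 0 < v z) →
    ∀ (x y : ES N) (T : ℝ), 0 < T → ball x (2 * T) ⊆ U → dist y x ≤ T / 2 → v y ≤ C * v x := by
  obtain ⟨B, hB0, hB⟩ := kh_bdd
  have hK : 0 < kH (9 / 16) := kH_pos (by norm_num)
  set C0 : ℝ := 4 ^ N * B / kH (9 / 16) with hC0
  have hC0p : 0 < C0 := by positivity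
  refine ⟨max 1 (C0 * Real.exp a), le_max_left _ _, ?_⟩
  intro U V v hU hne hV hv hpos x y T hT hball hxy
  have hxU : x ∈ U := hball (mem_ball_self (by linarith))
  have hcU := hv.1
  have hb32 : ball x (3 / 2 * T) ⊆ U := (ball_subset_ball (by linarith)).trans hball
  have hcx : ContinuousOn v (ball x (3 / 2 * T)) := hcU.mono hb32
  have hby : ball y (T / 2) ⊆ ball x (3 / 2 * T) := by
    intro z hz
    rw [mem_ball] at hz ⊢
    linarith [dist_triangle z y x]
  have h1 : v y * m0 N ≤ Mn v y (T / 4) := by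
    refine sub_mean (hcx.mono hby) (by linarith) (by linarith) fun φ hφ hφ0 => ?_
    have hφU := testFun_mono (hby.trans hb32) hφ
    rw [weak_eq hv hφU]
    exact weak_nonneg hV hpos hφU hφ0
  have h2 : Mn v y (T / 4) ≤ C0 * Mn v x T :=
    Mn_compare hcx hT (by linarith)
      (fun z hz => (hpos z (hb32 (ball_subset_ball (by linarith) hz))).le) hxy hB
  have ha : 0 ≤ a := (mul_nonneg (hV.2 x hxU).1 (sq_nonneg _)).trans (hV.2 x hxU).2
  have h3 : Mn v x T ≤ Real.exp (4 * a / T ^ 2 * T ^ 2 / 4) * (v x * m0 N) := by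
    refine super_mean hcx hT (by linarith) (by positivity)
      (fun z hz => (hpos z (hb32 hz)).le) fun φ hφ hφ0 => ?_
    rw [weak_eq hv (testFun_mono hb32 hφ), ← integral_const_mul]
    refine integral_mono_of_nonneg (Eventually.of_forall fun z => ?_)
      ((int_test isOpen_ball hcx hφ).const_mul _) (Eventually.of_forall fun z => ?_)
    · by_cases hz : z ∈ tsupport φ
      · have hzU := hb32 (hφ.2.2 hz)
        exact mul_nonneg (mul_nonneg (hV.2 z hzU).1 (hpos z hzU).le) (hφ0 z)
      · simp [image_eq_zero_of_notMem_tsupport hz]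
    · by_cases hz : z ∈ tsupport φ
      · have hzb := hφ.2.2 hz
        have hzU := hb32 hzb
        have hd : T / 2 ≤ dista U z := by
          refine (le_infDist hne).2 fun {y} hy => ?_
          by_contra hcon
          push Not at hcon
          refine hy (hball ?_)
          rw [mem_ball] at hzb ⊢
          linarith [dist_triangle y z x, dist_comm y z]
        have hVz : V z ≤ 4 * a / T ^ 2 := by
          rw [le_div_iff₀ (by positivity)]
          have := hV.2 z hzU
          have h4 : (T / 2) ^ 2 ≤ dista U z ^ 2 := pow_le_pow_left₀ (by linarith) hd 2
          nlinarith [mul_le_mul_of_nonneg_left h4 this.1]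
        calc V z * v z * φ z ≤ (4 * a / T ^ 2) * v z * φ z :=
              mul_le_mul_of_nonneg_right
                (mul_le_mul_of_nonneg_right hVz (hpos z hzU).le) (hφ0 z)
          _ = _ := by ring
      · simp [image_eq_zero_of_notMem_tsupport hz]
  have h4 : 4 * a / T ^ 2 * T ^ 2 / 4 = a := by field_simp
  rw [h4] at h3
  have h5 : v y * m0 N ≤ (C0 * Real.exp a * v x) * m0 N := by
    calc _ ≤ C0 * Mn v x T := h1.trans h2
      _ ≤ C0 * (Real.exp a * (v x * m0 N)) := mul_le_mul_of_nonneg_left h3 hC0p.le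
      _ = _ := by ring
  have h6 := le_of_mul_le_mul_right h5 (m0_pos N)
  exact h6.trans (mul_le_mul_of_nonneg_right (le_max_right _ _) (hpos x hxU).le)

lemma harnack_seg {U : Set (ES N)} {v : ES N → ℝ} {C T : ℝ} (hC : 1 ≤ C) (hT : 0 < T)
    (hH : ∀ x y : ES N, ball x (2 * T) ⊆ U → dist y x ≤ T / 2 → v y ≤ C * v x) (m : ℕ) :
    ∀ x y : ES N, (∀ p ∈ segment ℝ x y, ball p (2 * T) ⊆ U) → dist x y ≤ m * (T / 2) →
      v y ≤ C ^ m * v x := by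
  induction m with
  | zero =>
    intro x y _ hd
    have : x = y := by
      rw [← dist_le_zero]; simpa using hd
    simp [this]
  | succ m ih =>
    intro x y hp hd
    set s : ℝ := ((m : ℝ) + 1)⁻¹ with hs
    have hm : (0:ℝ) < (m:ℝ) + 1 := by positivity
    have hs0 : 0 ≤ s := by positivity
    have hs1 : s ≤ 1 := inv_le_one_of_one_le₀ (by linarith [(Nat.cast_nonneg m : (0:ℝ) ≤ m)])
    set p : ES N := AffineMap.lineMap x y s with hpdef
    have hps : p ∈ segment ℝ x y := by
      rw [segment_eq_image_lineMap]; exact ⟨s, ⟨hs0, hs1⟩, rfl⟩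
    push_cast at hd
    have d1 : dist p x ≤ T / 2 := by
      rw [hpdef, dist_lineMap_left, Real.norm_eq_abs, abs_of_nonneg hs0, hs, inv_mul_le_iff₀ hm]
      exact hd
    have d2 : dist p y ≤ m * (T / 2) := by
      rw [hpdef, dist_lineMap_right, Real.norm_eq_abs, abs_of_nonneg (by linarith)]
      have : 1 - s = m * s := by rw [hs]; field_simp; ring
      rw [this, mul_assoc]
      refine mul_le_mul_of_nonneg_left ?_ (Nat.cast_nonneg m)
      rw [hs, inv_mul_le_iff₀ hm]; exact hd
    have h1 := ih p y (fun w hw => hp w ((convex_segment x y).segment_subset hps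
      (right_mem_segment ℝ x y) hw)) d2
    have h2 := hH x p (hp x (left_mem_segment ℝ x y)) d1
    calc v y ≤ C ^ m * v p := h1
      _ ≤ C ^ m * (C * v x) := mul_le_mul_of_nonneg_left h2 (by positivity)
      _ = _ := by ring
end

section
variable {n : ℕ}

/-- The last basis vector. -/
def eN (n : ℕ) : ES (n + 1) := EuclideanSpace.single (Fin.last n) 1

/-- Height above the graph. -/
def hh (f : ES n → ℝ) (x : ES (n + 1)) : ℝ := lastC x - f (firstC x)

/-- The Lipschitz constant of the height. -/
def Lam (r ρ : ℝ) : ℝ := ρ / (10 * r) + 1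

/-- Standing geometric hypotheses. -/
structure Geo (r ρ : ℝ) (f : ES n → ℝ) : Prop where
  hr : 0 < r
  hρ : 10 * r < ρ
  f0 : f 0 = 0
  lip : ∀ x y, ‖x‖ < r → ‖y‖ < r → |f x - f y| ≤ ρ / (10 * r) * ‖x - y‖

lemma firstC_apply (x : ES (n + 1)) (i : Fin n) : firstC x i = x i.castSucc := rfl

lemma firstC_add (x y : ES (n + 1)) : firstC (x + y) = firstC x + firstC y := by
  ext i; simp [firstC_apply]

lemma firstC_sub (x y : ES (n + 1)) : firstC (x - y) = firstC x - firstC y := by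
  ext i; simp [firstC_apply]

lemma firstC_smul (t : ℝ) (y : ES (n + 1)) : firstC (t • y) = t • firstC y := by
  ext i; simp [firstC_apply]

lemma firstC_eN : firstC (eN n) = 0 := by
  ext i
  simp [firstC_apply, eN, Fin.castSucc_ne_last]

lemma lastC_add (x y : ES (n + 1)) : lastC (x + y) = lastC x + lastC y := by
  simp [lastC]

lemma lastC_sub (x y : ES (n + 1)) : lastC (x - y) = lastC x - lastC y := by
  simp [lastC]

lemma lastC_smul (t : ℝ) (y : ES (n + 1)) : lastC (t • y) = t * lastC y := by
  simp [lastC]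

lemma lastC_eN : lastC (eN n) = 1 := by
  simp [lastC, eN]

lemma firstC_up (x : ES (n + 1)) (t : ℝ) : firstC (x + t • eN n) = firstC x := by
  rw [firstC_add, firstC_smul, firstC_eN]; simp

lemma lastC_up (x : ES (n + 1)) (t : ℝ) : lastC (x + t • eN n) = lastC x + t := by
  rw [lastC_add, lastC_smul, lastC_eN]; simp

lemma hh_up (f : ES n → ℝ) (x : ES (n + 1)) (t : ℝ) : hh f (x + t • eN n) = hh f x + t := by
  simp only [hh, firstC_up, lastC_up]; ring

lemma norm_eN : ‖eN n‖ = 1 := by simp [eN]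

lemma dist_up (x : ES (n + 1)) (t : ℝ) : dist (x + t • eN n) x = |t| := by
  rw [dist_eq_norm, add_sub_cancel_left, norm_smul, norm_eN, Real.norm_eq_abs, mul_one]

lemma norm_sq_split (x : ES (n + 1)) : ‖x‖ ^ 2 = ‖firstC x‖ ^ 2 + lastC x ^ 2 := by
  rw [EuclideanSpace.real_norm_sq_eq, EuclideanSpace.real_norm_sq_eq, Fin.sum_univ_castSucc]
  rfl

lemma norm_firstC_le (x : ES (n + 1)) : ‖firstC x‖ ≤ ‖x‖ := by
  apply le_of_sq_le_sq _ (norm_nonneg _)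
  rw [norm_sq_split x]; nlinarith [sq_nonneg (lastC x)]

lemma abs_lastC_le (x : ES (n + 1)) : |lastC x| ≤ ‖x‖ := by
  apply abs_le_of_sq_le_sq _ (norm_nonneg _)
  rw [norm_sq_split x]; nlinarith [sq_nonneg (‖firstC x‖)]

lemma norm_le_split (x : ES (n + 1)) : ‖x‖ ≤ ‖firstC x‖ + |lastC x| := by
  apply le_of_sq_le_sq _ (by positivity)
  rw [norm_sq_split x, ← sq_abs (lastC x)]
  nlinarith [norm_nonneg (firstC x), abs_nonneg (lastC x)]

lemma dist_firstC_le (x y : ES (n + 1)) : ‖firstC x - firstC y‖ ≤ dist x y := by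
  rw [← firstC_sub, dist_eq_norm]; exact norm_firstC_le _

lemma dist_lastC_le (x y : ES (n + 1)) : |lastC x - lastC y| ≤ dist x y := by
  rw [← lastC_sub, dist_eq_norm]; exact abs_lastC_le _

lemma norm_firstC_add_le (x y : ES (n + 1)) : ‖firstC x‖ ≤ ‖firstC y‖ + dist x y := by
  have := norm_le_norm_add_norm_sub' (firstC x) (firstC y)
  linarith [dist_firstC_le x y]

lemma continuous_firstC : Continuous (firstC (n := n)) := by
  refine Metric.continuous_iff.2 fun b ε hε => ⟨ε, hε, fun a ha => ?_⟩
  rw [dist_eq_norm]; exact (dist_firstC_le a b).trans_lt ha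

lemma continuous_lastC : Continuous (lastC (n := n)) := by
  refine Metric.continuous_iff.2 fun b ε hε => ⟨ε, hε, fun a ha => ?_⟩
  rw [Real.dist_eq]; exact (dist_lastC_le a b).trans_lt ha

section
variable {r ρ : ℝ} {f : ES n → ℝ}

lemma Geo.Lam_gt (G : Geo r ρ f) : 2 < Lam r ρ := by
  have := G.hr
  have h : 1 < ρ / (10 * r) := by rw [lt_div_iff₀ (by positivity)]; linarith [G.hρ]
  unfold Lam; linarith

lemma Geo.Lam_pos (G : Geo r ρ f) : 0 < Lam r ρ := by linarith [G.Lam_gt]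

lemma Geo.rpos (G : Geo r ρ f) : 0 < ρ := by linarith [G.hr, G.hρ]

lemma Geo.hh_lip (G : Geo r ρ f) {x y : ES (n + 1)} (hx : ‖firstC x‖ < r) (hy : ‖firstC y‖ < r) :
    |hh f x - hh f y| ≤ Lam r ρ * dist x y := by
  have h1 := G.lip _ _ hx hy
  have h2 := dist_firstC_le x y
  have h3 := dist_lastC_le x y
  have hL : 0 < ρ / (10 * r) := by have := G.hr; have := G.rpos; positivity
  have h4 := mul_le_mul_of_nonneg_left h2 hL.le
  have h5 : hh f x - hh f y = (lastC x - lastC y) - (f (firstC x) - f (firstC y)) := by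
    simp only [hh]; ring
  rw [h5]
  refine (abs_sub _ _).trans ?_
  unfold Lam; linarith

lemma Geo.f_le (G : Geo r ρ f) {x : ES n} (hx : ‖x‖ < r) : |f x| ≤ ρ / 10 := by
  have h := G.lip x 0 hx (by simpa using G.hr)
  rw [G.f0, sub_zero, sub_zero] at h
  refine h.trans ?_
  have := G.hr; have := G.rpos
  calc ρ / (10 * r) * ‖x‖ ≤ ρ / (10 * r) * r := by gcongr
    _ = ρ / 10 := by field_simp

lemma mem_U {x : ES (n + 1)} : x ∈ Ucyl f r ρ ↔ ‖firstC x‖ < r ∧ 0 < hh f x ∧ lastC x < ρ := by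
  simp only [Ucyl, hh, sub_pos]; rfl

lemma Geo.hh_cont (G : Geo r ρ f) : ContinuousOn (hh f) {x | ‖firstC x‖ < r} := by
  have hΛ := G.Lam_pos
  refine Metric.continuousOn_iff.2 fun b hb ε hε => ⟨ε / Lam r ρ, by positivity, fun a ha hab => ?_⟩
  rw [Real.dist_eq]
  refine (G.hh_lip ha hb).trans_lt ?_
  rwa [lt_div_iff₀ hΛ, mul_comm] at hab

lemma isOpen_first (r : ℝ) : IsOpen {x : ES (n + 1) | ‖firstC x‖ < r} :=
  isOpen_lt continuous_firstC.norm continuous_const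

lemma Geo.isOpen_U (G : Geo r ρ f) : IsOpen (Ucyl f r ρ) := by
  have h1 := G.hh_cont.isOpen_inter_preimage (isOpen_first r) (isOpen_Ioi (a := (0:ℝ)))
  have h2 : IsOpen {x : ES (n + 1) | lastC x < ρ} := isOpen_lt continuous_lastC continuous_const
  convert h1.inter h2 using 1
  ext x; rw [mem_U]; simp only [mem_inter_iff, mem_preimage, mem_Ioi, mem_ofPred_eq, and_assoc]

lemma U_compl : ((Ucyl f r ρ)ᶜ).Nonempty := by
  refine ⟨ρ • eN n, fun h => ?_⟩
  have := h.2.2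
  rw [lastC_smul, lastC_eN] at this; linarith

lemma Geo.ball_sub (G : Geo r ρ f) {x : ES (n + 1)} {t : ℝ} (h1 : ‖firstC x‖ + t ≤ r)
    (h2 : lastC x + t ≤ ρ) (h3 : Lam r ρ * t ≤ hh f x) : ball x t ⊆ Ucyl f r ρ := by
  intro y hy
  have hd : dist y x < t := hy
  have ht : 0 < t := dist_nonneg.trans_lt hd
  have hx' : ‖firstC x‖ < r := by linarith
  have hy' : ‖firstC y‖ < r := by linarith [norm_firstC_add_le y x]
  refine mem_U.2 ⟨hy', ?_, ?_⟩
  · have := (abs_le.1 (G.hh_lip hy' hx')).1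
    have := mul_lt_mul_of_pos_left hd G.Lam_pos
    linarith
  · linarith [(abs_le.1 (dist_lastC_le y x)).2]

lemma Geo.mem_graph (G : Geo r ρ f) {z : ES (n + 1)} (hz : ‖firstC z‖ < r) (h0 : hh f z = 0) :
    z ∈ graphBdry f r ρ := by
  have hl : lastC z = f (firstC z) := by simp only [hh] at h0; linarith
  refine ⟨⟨?_, ?_⟩, hz, hl⟩
  · have hf := (abs_le.1 (G.f_le hz)).2
    have hρ := G.rpos
    refine Metric.mem_closure_iff.2 fun ε hε => ⟨z + (min (ε / 2) (ρ / 2)) • eN n, ?_, ?_⟩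
    · refine mem_U.2 ⟨by rwa [firstC_up], ?_, ?_⟩
      · rw [hh_up, h0]; positivity
      · rw [lastC_up, hl]; linarith [min_le_right (ε / 2) (ρ / 2)]
    · rw [dist_comm, dist_up, abs_of_pos (by positivity)]
      linarith [min_le_left (ε / 2) (ρ / 2)]
  · rw [G.isOpen_U.interior_eq]
    intro h; have := (mem_U.1 h).2.1; linarith

/-- zero extension is continuous across the graph. -/
lemma Geo.ext_cont (G : Geo r ρ f) {v : ES (n + 1) → ℝ} (hv : ContinuousOn v (Ucyl f r ρ))
    (hb : ∀ z ∈ graphBdry f r ρ, Tendsto v (𝓝[Ucyl f r ρ] z) (𝓝 0)) :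
    ContinuousOn ((Ucyl f r ρ).indicator v) {x | ‖firstC x‖ < r ∧ lastC x < ρ} := by
  intro z hz
  apply ContinuousAt.continuousWithinAt
  have ev1 : ∀ᶠ y in 𝓝 z, ‖firstC y‖ < r := (isOpen_first r).mem_nhds hz.1
  have hhc : ContinuousAt (hh f) z := G.hh_cont.continuousAt ((isOpen_first r).mem_nhds hz.1)
  rcases lt_trichotomy (hh f z) 0 with h | h | h
  · have : (Ucyl f r ρ).indicator v =ᶠ[𝓝 z] fun _ => 0 := by
      filter_upwards [hhc.eventually_lt continuousAt_const h] with y hy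
      refine indicator_of_notMem (fun hyU => ?_) _
      linarith [(mem_U.1 hyU).2.1]
    exact continuousAt_const.congr this.symm
  · have hzU : z ∉ Ucyl f r ρ := fun hyU => by linarith [(mem_U.1 hyU).2.1]
    have ht := hb z (G.mem_graph hz.1 h)
    rw [ContinuousAt, indicator_of_notMem hzU, Metric.tendsto_nhds]
    intro ε hε
    have := eventually_nhdsWithin_iff.1 ((Metric.tendsto_nhds.1 ht) ε hε)
    filter_upwards [this] with y hy
    by_cases hyU : y ∈ Ucyl f r ρ
    · rw [indicator_of_mem hyU]; exact hy hyU
    · rw [indicator_of_notMem hyU, dist_self]; exact hε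
  · have hzU : Ucyl f r ρ ∈ 𝓝 z := G.isOpen_U.mem_nhds (mem_U.2 ⟨hz.1, h, hz.2⟩)
    refine (hv.continuousAt hzU).congr ?_
    filter_upwards [hzU] with y hy
    rw [indicator_of_mem hy]

lemma single_eq (t : ℝ) : EuclideanSpace.single (Fin.last n) t = t • eN n := by
  ext i
  by_cases h : i = Fin.last n
  · subst h; simp [eN]
  · simp [eN, h]

end
end

section
variable {n : ℕ}

/-- Interior Harnack property with constant `C`. -/
def HarnP (U : Set (ES (n + 1))) (C : ℝ) (v : ES (n + 1) → ℝ) : Prop :=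
  ∀ x y T, 0 < T → ball x (2 * T) ⊆ U → dist y x ≤ T / 2 → v y ≤ C * v x

lemma seg_up {x p : ES (n + 1)} {τ : ℝ} (hp : p ∈ segment ℝ x (x + τ • eN n)) :
    ∃ s : ℝ, 0 ≤ s ∧ s ≤ 1 ∧ p = x + (s * τ) • eN n := by
  rw [segment_eq_image'] at hp
  obtain ⟨s, hs, rfl⟩ := hp
  refine ⟨s, hs.1, hs.2, ?_⟩
  simp only [add_sub_cancel_left, smul_smul]

lemma chain {r ρ C δ : ℝ} (hC : 1 ≤ C) (hδ : 0 < δ) :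
    ∃ D : ℝ, 1 ≤ D ∧ ∀ f : ES n → ℝ, Geo r ρ f → ∀ v, HarnP (Ucyl f r ρ) C v →
      (∀ x ∈ Ucyl f r ρ, 0 < v x) →
      ∀ x, ‖firstC x‖ ≤ 7 / 8 * r → δ ≤ hh f x → lastC x ≤ 3 / 4 * ρ →
        v x ≤ D * v ((ρ / 2) • eN n) ∧ v ((ρ / 2) • eN n) ≤ D * v x := by
  set T := min δ r / (16 * Lam r ρ) with hT
  set m := ⌈ρ / (T / 2)⌉₊ with hm
  refine ⟨C ^ m * C ^ m, one_le_mul_of_one_le_of_one_le (one_le_pow₀ hC) (one_le_pow₀ hC), ?_⟩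
  intro f G v hH hpos x hx1 hx2 hx3
  have hr := G.hr
  have hρ := G.hρ
  have hΛ := G.Lam_gt
  have hTpos : 0 < T := by have := G.Lam_pos; positivity
  have hT1 : Lam r ρ * (2 * T) = min δ r / 8 := by
    have := G.Lam_pos; rw [hT]; field_simp; ring
  have hmin1 := min_le_left δ r
  have hmin2 := min_le_right δ r
  have hT2 : 2 * T ≤ r / 8 := by nlinarith
  have hmT : ρ ≤ m * (T / 2) := by
    have := Nat.le_ceil (ρ / (T / 2))
    rw [div_le_iff₀ (by positivity)] at this
    exact this
  have hxr : ‖firstC x‖ < r := by linarith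
  have hf := abs_le.1 (G.f_le hxr)
  have hhx : hh f x = lastC x - f (firstC x) := rfl
  set y := x + (ρ / 2 - lastC x) • eN n with hy
  have hHT : ∀ x y, ball x (2 * T) ⊆ Ucyl f r ρ → dist y x ≤ T / 2 → v y ≤ C * v x :=
    fun x y => hH x y T hTpos
  have seg1 : ∀ p ∈ segment ℝ x y, ball p (2 * T) ⊆ Ucyl f r ρ := by
    intro p hp
    obtain ⟨s, hs0, hs1, rfl⟩ := seg_up hp
    apply G.ball_sub
    · rw [firstC_up]; linarith
    · rw [lastC_up]; nlinarith
    · rw [hh_up, hT1]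
      have : 0 ≤ (1 - s) * (hh f x - δ) := mul_nonneg (by linarith) (by linarith)
      have : 0 ≤ s * (ρ / 2 - f (firstC x) - δ / 8 - (min δ r / 8 - δ / 8)) :=
        mul_nonneg hs0 (by linarith)
      have : 0 ≤ (1 - s) * (δ - min δ r / 8) := mul_nonneg (by linarith) (by linarith)
      nlinarith
  have seg2 : ∀ p ∈ segment ℝ y ((ρ / 2) • eN n), ball p (2 * T) ⊆ Ucyl f r ρ := by
    intro p hp
    rw [segment_eq_image] at hp
    obtain ⟨s, hs, rfl⟩ := hp
    have e1 : firstC ((1 - s) • y + s • ((ρ / 2) • eN n)) = (1 - s) • firstC x := by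
      rw [firstC_add, firstC_smul, firstC_smul, firstC_smul, firstC_eN, hy, firstC_up]; simp
    have e2 : lastC ((1 - s) • y + s • ((ρ / 2) • eN n)) = ρ / 2 := by
      rw [lastC_add, lastC_smul, lastC_smul, lastC_smul, lastC_eN, hy, lastC_up]; ring
    have e3 : ‖(1 - s) • firstC x‖ ≤ 7 / 8 * r := by
      rw [norm_smul, Real.norm_eq_abs, abs_of_nonneg (by linarith [hs.2])]
      nlinarith [hs.1, hs.2, norm_nonneg (firstC x)]
    have hf2 := abs_le.1 (G.f_le (x := (1 - s) • firstC x) (by linarith))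
    apply G.ball_sub
    · rw [e1]; linarith
    · rw [e2]; linarith
    · rw [hT1, hh, e1, e2]; linarith
  have d1 : dist x y ≤ m * (T / 2) := by
    rw [dist_comm, hy, dist_up]
    refine le_trans (abs_le.2 ⟨?_, ?_⟩) hmT <;> linarith
  have d2 : dist y ((ρ / 2) • eN n) ≤ m * (T / 2) := by
    refine le_trans ?_ hmT
    rw [dist_eq_norm]
    refine (norm_le_split _).trans ?_
    rw [firstC_sub, lastC_sub, firstC_smul, lastC_smul, firstC_eN, lastC_eN, hy, firstC_up,
      lastC_up]
    simp; linarith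
  have a1 := harnack_seg hC hTpos hHT m x y seg1 d1
  have a2 := harnack_seg hC hTpos hHT m y _ seg2 d2
  have a3 := harnack_seg hC hTpos hHT m y x (by rwa [segment_symm]) (by rwa [dist_comm])
  have a4 := harnack_seg hC hTpos hHT m _ y (by rwa [segment_symm]) (by rwa [dist_comm])
  have hCm : 0 ≤ C ^ m := by positivity
  constructor
  · calc v x ≤ C ^ m * v y := a3
      _ ≤ C ^ m * (C ^ m * v ((ρ / 2) • eN n)) := mul_le_mul_of_nonneg_left a4 hCm
      _ = _ := by ring
  · calc v ((ρ / 2) • eN n) ≤ C ^ m * v y := a2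
      _ ≤ C ^ m * (C ^ m * v x) := mul_le_mul_of_nonneg_left a1 hCm
      _ = _ := by ring

lemma Geo.U_of {r ρ : ℝ} {f : ES n → ℝ} (G : Geo r ρ f) {x : ES (n + 1)} (h1 : ‖firstC x‖ < r)
    (h2 : 0 < hh f x) (h3 : hh f x ≤ r) : x ∈ Ucyl f r ρ ∧ lastC x ≤ 1 / 5 * ρ := by
  have hf := abs_le.1 (G.f_le h1)
  have hhx : hh f x = lastC x - f (firstC x) := rfl
  have := G.hr
  have := G.hρ
  exact ⟨mem_U.2 ⟨h1, h2, by linarith⟩, by linarith⟩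

lemma growth {r ρ C : ℝ} (hr : 0 < r) (hC : 1 ≤ C) :
    ∃ (γ : ℕ) (D : ℝ), 1 ≤ γ ∧ 1 ≤ D ∧ ∀ f : ES n → ℝ, Geo r ρ f → ∀ v, HarnP (Ucyl f r ρ) C v →
      (∀ x ∈ Ucyl f r ρ, 0 < v x) →
      ∀ x, ‖firstC x‖ ≤ 7 / 8 * r → 0 < hh f x → hh f x ≤ r / 4 →
        v x * hh f x ^ γ ≤ D * r ^ γ * v ((ρ / 2) • eN n) := by
  obtain ⟨D, hD1, hD⟩ := chain (n := n) (r := r) (ρ := ρ) hC (δ := r / 8) (by positivity)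
  set m := ⌈4 * Lam r ρ⌉₊ with hm
  obtain ⟨γ, hγ⟩ := pow_unbounded_of_one_lt (C ^ m) (one_lt_two : (1:ℝ) < 2)
  have hγ1 : 1 ≤ γ := by
    rcases Nat.eq_zero_or_pos γ with h | h
    · rw [h, pow_zero] at hγ; linarith [one_le_pow₀ (n := m) hC]
    · exact h
  refine ⟨γ, D, hγ1, hD1, ?_⟩
  intro f G v hH hpos
  have hρ := G.hρ
  have hΛ := G.Lam_gt
  have hAU : (ρ / 2) • eN n ∈ Ucyl f r ρ := by
    refine mem_U.2 ⟨?_, ?_, ?_⟩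
    · rw [firstC_smul, firstC_eN]; simpa using hr
    · rw [hh, firstC_smul, firstC_eN, lastC_smul, lastC_eN, smul_zero, G.f0]; linarith
    · rw [lastC_smul, lastC_eN]; linarith
  have hA := hpos _ hAU
  have base : ∀ x, ‖firstC x‖ ≤ 7 / 8 * r → r / 8 ≤ hh f x → hh f x ≤ r / 4 →
      v x * hh f x ^ γ ≤ D * r ^ γ * v ((ρ / 2) • eN n) := by
    intro x h1 h2 h3
    obtain ⟨hU, hl⟩ := G.U_of (x := x) (by linarith) (by linarith) (by linarith)
    have a1 := (hD f G v hH hpos x h1 h2 (by linarith)).1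
    have a2 : hh f x ^ γ ≤ r ^ γ := pow_le_pow_left₀ (by linarith) (by linarith) _
    calc v x * hh f x ^ γ ≤ (D * v ((ρ / 2) • eN n)) * r ^ γ :=
          mul_le_mul a1 a2 (pow_nonneg (by linarith) _) (by positivity)
      _ = _ := by ring
  have key : ∀ k : ℕ, ∀ x, ‖firstC x‖ ≤ 7 / 8 * r → r / 8 ≤ 2 ^ k * hh f x → hh f x ≤ r / 4 →
      v x * hh f x ^ γ ≤ D * r ^ γ * v ((ρ / 2) • eN n) := by
    intro k
    induction k with
    | zero => intro x h1 h2 h3; exact base x h1 (by simpa using h2) h3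
    | succ k ih =>
      intro x h1 h2 h3
      rcases le_or_gt (r / 8) (hh f x) with hc | hc
      · exact base x h1 hc h3
      · have hx0 : 0 < hh f x := by
          have : (0:ℝ) < 2 ^ (k + 1) * hh f x := by linarith
          exact pos_of_mul_pos_right this (by positivity)
        set y := x + hh f x • eN n with hy
        have hhy : hh f y = 2 * hh f x := by rw [hy, hh_up]; ring
        have i1 := ih y (by rw [hy, firstC_up]; exact h1) (by rw [hhy]; rw [pow_succ] at h2; linarith)
          (by rw [hhy]; linarith)
        set T := hh f x / (2 * Lam r ρ) with hT
        have hΛp := G.Lam_pos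
        have hTpos : 0 < T := by positivity
        have hT1 : Lam r ρ * (2 * T) = hh f x := by rw [hT]; field_simp
        have hT2 : 2 * T ≤ r / 8 := by nlinarith
        obtain ⟨hU, hl⟩ := G.U_of (x := x) (by linarith) (by linarith) (by linarith)
        have hyx := harnack_seg hC hTpos (fun x y => hH x y T hTpos) m y x (by
          rw [segment_symm]
          intro p hp
          obtain ⟨s, hs0, hs1, rfl⟩ := seg_up hp
          apply G.ball_sub
          · rw [firstC_up]; linarith
          · rw [lastC_up]; nlinarith
          · rw [hh_up, hT1]; nlinarith) (by
          rw [hy, dist_up, abs_of_pos hx0]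
          have := Nat.le_ceil (4 * Lam r ρ)
          calc hh f x = 4 * Lam r ρ * (T / 2) := by rw [hT]; field_simp; norm_num
            _ ≤ m * (T / 2) := by gcongr)
        have hyU : 0 < v y := hpos _ (G.U_of (x := y) (by rw [hy, firstC_up]; linarith)
          (by linarith) (by linarith)).1
        calc v x * hh f x ^ γ ≤ (C ^ m * v y) * hh f x ^ γ := by gcongr
          _ ≤ (2 ^ γ * v y) * hh f x ^ γ := by gcongr
          _ = v y * hh f y ^ γ := by rw [hhy, mul_pow]; ring
          _ ≤ _ := i1
  intro x h1 h2 h3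
  obtain ⟨k, hk⟩ := pow_unbounded_of_one_lt (r / 8 / hh f x) (one_lt_two : (1:ℝ) < 2)
  refine key k x h1 ?_ h3
  rw [div_lt_iff₀ h2] at hk
  exact hk.le
end

section
variable {n : ℕ}

lemma decayU {r ρ : ℝ} (hr : 0 < r) (hρ : 10 * r < ρ) :
    ∃ θ : ℝ, 0 < θ ∧ θ < 1 ∧ ∀ f : ES n → ℝ, Geo r ρ f → ∀ (g : ES (n + 1) → ℝ) (η S : ℝ)
      (x : ES (n + 1)), 0 < η → 0 ≤ S → ‖firstC x‖ + 4 * η < r → 0 < hh f x → hh f x ≤ η →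
      4 * Lam r ρ * η ≤ r →
      ContinuousOn g {z | ‖firstC z‖ < r ∧ lastC z < ρ} →
      (∀ z, ‖firstC z‖ < r → hh f z ≤ 0 → g z = 0) →
      (∀ z, ‖firstC z - firstC x‖ ≤ 4 * η → 0 < hh f z → hh f z ≤ 4 * Lam r ρ * η → g z ≤ S) →
      (∀ z, z ∈ Ucyl f r ρ → 0 < g z →
        ∃ ε > 0, ∀ φ, IsTestFun (ball z ε) φ → (∀ y, 0 ≤ φ y) → 0 ≤ ∫ y, g y * lap φ y) →
      g x ≤ (1 - θ) * S := by
  have hΛ : 2 < Lam r ρ := by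
    have h : 1 < ρ / (10 * r) := by rw [lt_div_iff₀ (by positivity)]; linarith
    unfold Lam; linarith
  have hΛp : 0 < Lam r ρ := by linarith
  obtain ⟨θ, h0, h1, H⟩ := decay (N := n + 1) (Nat.succ_pos n) (κ := 1 / Lam r ρ) (by positivity)
    ((div_lt_one hΛp).2 (by linarith))
  refine ⟨θ, h0, h1, ?_⟩
  intro f G g η S x hη hS hx1 hx2 hx3 hΛη hgc hg0 hgS hsub
  set b := x + (-(hh f x + η)) • eN n with hb
  have hbf : firstC b = firstC x := firstC_up _ _
  have hbh : hh f b = -η := by rw [hb, hh_up]; ring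
  have hxr : ‖firstC x‖ < r := by linarith
  have hf := abs_le.1 (G.f_le hxr)
  have P : ∀ z ∈ closedBall b (4 * η), ‖firstC z - firstC x‖ ≤ 4 * η ∧ ‖firstC z‖ < r ∧
      hh f z ≤ 4 * Lam r ρ * η ∧ lastC z < ρ := by
    intro z hz
    have hd : dist z b ≤ 4 * η := hz
    have a1 := dist_firstC_le z b
    have a2 := norm_firstC_add_le z b
    rw [hbf] at a1 a2
    have a3 : ‖firstC z‖ < r := by linarith
    have a4 := (abs_le.1 (G.hh_lip a3 (by rw [hbf]; exact hxr) (y := b))).2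
    have a5 := mul_le_mul_of_nonneg_left hd hΛp.le
    have a6 : hh f z ≤ 4 * Lam r ρ * η := by rw [hbh] at a4; linarith
    have hfz := abs_le.1 (G.f_le a3)
    have : hh f z = lastC z - f (firstC z) := rfl
    exact ⟨by linarith, a3, a6, by linarith⟩
  refine H b η g S hη hS (hgc.mono fun z hz => ⟨(P z hz).2.1, (P z hz).2.2.2⟩) ?_ ?_ ?_ x ?_
  · intro z hz
    have hd : dist z b ≤ 1 / Lam r ρ * η := hz
    have hz4 : z ∈ closedBall b (4 * η) := by
      refine hd.trans ?_
      have : 1 / Lam r ρ ≤ 1 := by rw [div_le_one hΛp]; linarith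
      nlinarith
    obtain ⟨-, c1, -, -⟩ := P z hz4
    apply hg0 z c1
    have a4 := (abs_le.1 (G.hh_lip c1 (by rw [hbf]; exact hxr) (y := b))).2
    have a5 := mul_le_mul_of_nonneg_left hd hΛp.le
    have a6 : Lam r ρ * (1 / Lam r ρ * η) = η := by field_simp
    rw [hbh] at a4; linarith
  · intro z hz
    obtain ⟨c0, c1, c2, c3⟩ := P z hz
    rcases le_or_gt (hh f z) 0 with h | h
    · rw [hg0 z c1 h]; exact hS
    · exact hgS z c0 h c2
  · intro z hz hgz
    obtain ⟨c0, c1, c2, c3⟩ := P z (ball_subset_closedBall hz)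
    refine hsub z (mem_U.2 ⟨c1, ?_, c3⟩) hgz
    by_contra h
    push Not at h
    rw [hg0 z c1 h] at hgz
    exact lt_irrefl _ hgz
  · rw [dist_comm, hb, dist_up, abs_neg, abs_of_pos (by linarith)]; linarith

/-- Positive (sub)solution with Harnack property vanishing on the graph. -/
structure Sol (f : ES n → ℝ) (r ρ C : ℝ) (v : ES (n + 1) → ℝ) : Prop where
  cont : ContinuousOn v (Ucyl f r ρ)
  pos : ∀ x ∈ Ucyl f r ρ, 0 < v x
  bdry : ∀ z ∈ graphBdry f r ρ, Tendsto v (𝓝[Ucyl f r ρ] z) (𝓝 0)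
  harn : HarnP (Ucyl f r ρ) C v
  sub : ∀ φ, IsTestFun (Ucyl f r ρ) φ → (∀ y, 0 ≤ φ y) → 0 ≤ ∫ y, v y * lap φ y

lemma int_congr_test {B : Set (ES (n + 1))} {g v φ : ES (n + 1) → ℝ} (hφ : IsTestFun B φ)
    (h : ∀ y ∈ B, g y = v y) : ∫ y, g y * lap φ y = ∫ y, v y * lap φ y := by
  refine integral_congr_ae (Eventually.of_forall fun y => ?_)
  by_cases hy : y ∈ tsupport φ
  · simp only [h y (hφ.2.2 hy)]
  · simp only [lap_zero_off hy, mul_zero]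

lemma Geo.A_mem {r ρ : ℝ} {f : ES n → ℝ} (G : Geo r ρ f) : (ρ / 2) • eN n ∈ Ucyl f r ρ := by
  have := G.hr
  have := G.hρ
  refine mem_U.2 ⟨?_, ?_, ?_⟩
  · rw [firstC_smul, firstC_eN]; simpa using G.hr
  · rw [hh, firstC_smul, firstC_eN, lastC_smul, lastC_eN, smul_zero, G.f0]; linarith
  · rw [lastC_smul, lastC_eN]; linarith

lemma Geo.isCompact_K {r ρ : ℝ} {f : ES n → ℝ} (G : Geo r ρ f) {R h : ℝ} (hR : R < r) :
    IsCompact {z : ES (n + 1) | ‖firstC z‖ ≤ R ∧ 0 ≤ hh f z ∧ hh f z ≤ h} := by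
  apply Metric.isCompact_of_isClosed_isBounded
  · have h1 : IsClosed {z : ES (n + 1) | ‖firstC z‖ ≤ R} :=
      isClosed_le continuous_firstC.norm continuous_const
    have h2 : ContinuousOn (hh f) {z : ES (n + 1) | ‖firstC z‖ ≤ R} :=
      G.hh_cont.mono fun z hz => lt_of_le_of_lt hz hR
    exact h2.preimage_isClosed_of_isClosed h1 (isClosed_Icc (a := (0:ℝ)) (b := h))
  · refine (Metric.isBounded_iff_subset_closedBall 0).2 ⟨R + (h + ρ / 10), fun z hz => ?_⟩
    rw [mem_closedBall, dist_zero_right]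
    have hf := abs_le.1 (G.f_le (lt_of_le_of_lt hz.1 hR))
    have e : hh f z = lastC z - f (firstC z) := rfl
    have h2 := hz.2.1
    have h3 := hz.2.2
    have : |lastC z| ≤ h + ρ / 10 := abs_le.2 ⟨by linarith, by linarith⟩
    exact (norm_le_split z).trans (add_le_add hz.1 this)

lemma carleson {r ρ C : ℝ} (hr : 0 < r) (hρ : 10 * r < ρ) (hC : 1 ≤ C) :
    ∃ D : ℝ, 1 ≤ D ∧ ∀ f : ES n → ℝ, Geo r ρ f → ∀ v, Sol f r ρ C v →
      ∀ x, ‖firstC x‖ ≤ 3 / 4 * r → 0 < hh f x → hh f x ≤ r / 4 →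
        v x ≤ D * v ((ρ / 2) • eN n) := by
  obtain ⟨γ, D, hγ, hD1, hgr⟩ := growth (n := n) (ρ := ρ) hr hC
  obtain ⟨θ, hθ0, hθ1, hdec⟩ := decayU (n := n) hr hρ
  have hΛ : 2 < Lam r ρ := by
    have h : 1 < ρ / (10 * r) := by rw [lt_div_iff₀ (by positivity)]; linarith
    unfold Lam; linarith
  have hΛp : 0 < Lam r ρ := by linarith
  have hγp : (0:ℝ) < γ := by exact_mod_cast hγ
  set ε := min (1 / (16 * Lam r ρ)) (θ / (8 * γ)) with hε
  have hε0 : 0 < ε := by positivity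
  have hε1 : ε * Lam r ρ ≤ 1 / 16 := by
    have := min_le_left (1 / (16 * Lam r ρ)) (θ / (8 * γ))
    rw [← hε, le_div_iff₀ (by positivity)] at this; linarith
  have hε2 : 8 * ε * γ ≤ θ := by
    have := min_le_right (1 / (16 * Lam r ρ)) (θ / (8 * γ))
    rw [← hε, le_div_iff₀ (by positivity)] at this; linarith
  have hε3 : ε ≤ 1 / 32 := by nlinarith
  have hbern : 1 - θ < (1 - 4 * ε) ^ γ := by
    have := one_add_mul_le_pow (a := -(4 * ε)) (by linarith) γ
    rw [← sub_eq_add_neg] at this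
    nlinarith
  refine ⟨max 1 (D * r ^ γ / ε ^ γ / (r / 8) ^ γ), le_max_left _ _, ?_⟩
  intro f G v hv
  have hA := hv.pos _ G.A_mem
  set vA := v ((ρ / 2) • eN n) with hvA
  set K := {z : ES (n + 1) | ‖firstC z‖ ≤ 7 / 8 * r ∧ 0 ≤ hh f z ∧ hh f z ≤ r / 4} with hK
  have hKc : IsCompact K := G.isCompact_K (by linarith)
  set vb := (Ucyl f r ρ).indicator v with hvb
  have hvbc := G.ext_cont hv.cont hv.bdry
  have hKQ : K ⊆ {x | ‖firstC x‖ < r ∧ lastC x < ρ} := by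
    intro z hz
    have h1 : ‖firstC z‖ < r := by linarith [hz.1]
    have hf := abs_le.1 (G.f_le h1)
    have e : hh f z = lastC z - f (firstC z) := rfl
    exact ⟨h1, by linarith [hz.2.2]⟩
  have hvb0 : ∀ z, 0 ≤ vb z := fun z => indicator_nonneg (fun y hy => (hv.pos y hy).le) z
  have hvbz : ∀ z, hh f z ≤ 0 → vb z = 0 := fun z hz =>
    indicator_of_notMem (fun h => by linarith [(mem_U.1 h).2.1]) _
  set F : ES (n + 1) → ℝ := fun z => vb z * (7 / 8 * r - ‖firstC z‖) ^ γ with hF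
  have hFc : ContinuousOn F K := (hvbc.mono hKQ).mul
    ((continuous_const.sub continuous_firstC.norm).pow γ).continuousOn
  set B := D * r ^ γ / ε ^ γ * vA with hB
  have hB0 : 0 ≤ B := by positivity
  have main : ∀ z ∈ K, F z ≤ B := by
    intro z0 hz0
    obtain ⟨x0, hx0, hmax⟩ := hKc.exists_isMaxOn ⟨z0, hz0⟩ hFc
    refine (hmax hz0).trans ?_
    set d0 := 7 / 8 * r - ‖firstC x0‖ with hd0
    have hd00 : 0 ≤ d0 := by linarith [hx0.1]
    have hd0r : d0 ≤ r := by linarith [norm_nonneg (firstC x0)]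
    have hFx : F x0 = vb x0 * d0 ^ γ := rfl
    rcases hd00.eq_or_lt with hd | hd
    · rw [hFx, ← hd, zero_pow (by omega), mul_zero]; exact hB0
    rcases hx0.2.1.eq_or_lt with hh0 | hh0
    · rw [hFx, hvbz x0 hh0.symm.le, zero_mul]; exact hB0
    have hxr : ‖firstC x0‖ < r := by linarith [hx0.1]
    have hxU := (G.U_of hxr hh0 (by linarith [hx0.2.2])).1
    have hvbx : vb x0 = v x0 := indicator_of_mem hxU _
    have hvx := hv.pos x0 hxU
    rcases le_or_gt (ε * d0) (hh f x0) with hcase | hcase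
    · have g1 := hgr f G v hv.harn hv.pos x0 hx0.1 hh0 hx0.2.2
      have g2 : (ε * d0) ^ γ ≤ hh f x0 ^ γ := pow_le_pow_left₀ (by positivity) hcase _
      rw [hFx, hvbx, hB, div_mul_eq_mul_div, le_div_iff₀ (by positivity)]
      calc v x0 * d0 ^ γ * ε ^ γ = v x0 * (ε * d0) ^ γ := by rw [mul_pow]; ring
        _ ≤ v x0 * hh f x0 ^ γ := by gcongr
        _ ≤ _ := g1
    · exfalso
      set η := hh f x0 with hη
      have p1 : (0:ℝ) < (1 - 4 * ε) ^ γ := pow_pos (by linarith) _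
      have hηd : 4 * η ≤ d0 / 8 := by nlinarith
      have hΛη : 4 * Lam r ρ * η ≤ r / 4 := by nlinarith
      have hres := hdec f G vb η (vb x0 / (1 - 4 * ε) ^ γ) x0 hh0
        (div_nonneg (hvb0 _) p1.le) (by linarith) hh0 le_rfl (by linarith) hvbc
        (fun z _ hz => hvbz z hz) (by
          intro z hz1 hz2 hz3
          have hzn : ‖firstC z‖ ≤ ‖firstC x0‖ + 4 * η := by
            have := norm_le_norm_add_norm_sub' (firstC z) (firstC x0); linarith
          have hzK : z ∈ K := ⟨by linarith, hz2.le, by linarith⟩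
          have hm : F z ≤ F x0 := hmax hzK
          rw [le_div_iff₀ p1]
          have q1 : ((1 - 4 * ε) * d0) ^ γ ≤ (7 / 8 * r - ‖firstC z‖) ^ γ :=
            pow_le_pow_left₀ (mul_nonneg (by linarith) hd00) (by nlinarith) _
          have q2 : vb z * (1 - 4 * ε) ^ γ * d0 ^ γ ≤ vb x0 * d0 ^ γ := by
            calc vb z * (1 - 4 * ε) ^ γ * d0 ^ γ = vb z * ((1 - 4 * ε) * d0) ^ γ := by
                  rw [mul_pow]; ring
              _ ≤ F z := mul_le_mul_of_nonneg_left q1 (hvb0 z)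
              _ ≤ _ := hm
          exact le_of_mul_le_mul_right q2 (by positivity)) (by
          intro z hzU _
          obtain ⟨ε', hε', hball⟩ := Metric.isOpen_iff.1 G.isOpen_U z hzU
          refine ⟨ε', hε', fun φ hφ hφ0 => ?_⟩
          rw [int_congr_test hφ (fun y hy => indicator_of_mem (hball hy) v)]
          exact hv.sub φ (testFun_mono hball hφ) hφ0)
      rw [hvbx, ← mul_div_assoc, le_div_iff₀ p1] at hres
      have := mul_lt_mul_of_pos_left hbern hvx
      linarith
  intro x hx1 hx2 hx3
  have hxU := (G.U_of (x := x) (by linarith) hx2 (by linarith)).1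
  have h1 := main x ⟨by linarith, hx2.le, hx3⟩
  have h2 : F x = v x * (7 / 8 * r - ‖firstC x‖) ^ γ := by
    simp only [hF, hvb, indicator_of_mem hxU]
  have h3 : (r / 8) ^ γ ≤ (7 / 8 * r - ‖firstC x‖) ^ γ :=
    pow_le_pow_left₀ (by linarith) (by linarith) _
  have h4 : v x * (r / 8) ^ γ ≤ B := by
    rw [h2] at h1
    exact (mul_le_mul_of_nonneg_left h3 (hv.pos x hxU).le).trans h1
  rw [← le_div_iff₀ (by positivity)] at h4
  refine h4.trans ?_
  calc B / (r / 8) ^ γ = D * r ^ γ / ε ^ γ / (r / 8) ^ γ * vA := by rw [hB]; ring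
    _ ≤ _ := mul_le_mul_of_nonneg_right (le_max_right _ _) hA.le
end

section
variable {n : ℕ}

/-- Continuous subsolution data for the difference function. -/
structure Qf (f : ES n → ℝ) (r ρ : ℝ) (q : ES (n + 1) → ℝ) : Prop where
  cont : ContinuousOn q (Ucyl f r ρ)
  contb : ContinuousOn ((Ucyl f r ρ).indicator q) {x | ‖firstC x‖ < r ∧ lastC x < ρ}
  sub : ∀ φ, IsTestFun (Ucyl f r ρ) φ → (∀ y, 0 ≤ φ y) → 0 ≤ ∫ y, q y * lap φ y

lemma int_lap_zero {N : ℕ} {φ : ES N → ℝ} {D : Set (ES N)} (hφ : IsTestFun D φ) :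
    ∫ y, lap φ y = 0 := by
  have h := ibp (E := fun _ : ES N => (1:ℝ)) contDiff_const hφ.1 hφ.2.1
  simpa [lap] using h

/-- bounds on a cylinder over the graph. -/
def CylB (f : ES n → ℝ) (q : ES (n + 1) → ℝ) (z0 : ES n) (δ s B M : ℝ) : Prop :=
  (∀ x, ‖firstC x - z0‖ < s → 0 < hh f x → hh f x < s → q x ≤ B) ∧
  (∀ x, ‖firstC x - z0‖ < s → δ * s ≤ hh f x → hh f x < s → q x ≤ -(M * B))

set_option maxHeartbeats 1000000 in
lemma step_lower {r ρ : ℝ} (hr : 0 < r) (hρ : 10 * r < ρ) :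
    ∃ M : ℝ, 2 ≤ M ∧ ∀ (δ : ℝ), 0 < δ → δ ≤ 1 / 2 → δ ≤ 2 * Lam r ρ * (1 / (16 * Lam r ρ)) →
      ∀ f : ES n → ℝ, Geo r ρ f → ∀ q, Qf f r ρ q → ∀ (z0 : ES n) (s B : ℝ), 0 < s → s ≤ r / 4 →
      ‖z0‖ + s ≤ 3 / 4 * r → 0 ≤ B → CylB f q z0 δ s B M →
      ∀ x, ‖firstC x - z0‖ < (1 - 1 / (16 * Lam r ρ)) * s →
        δ * ((1 - 1 / (16 * Lam r ρ)) * s) ≤ hh f x → hh f x < δ * s → q x ≤ -B := by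
  have hΛ : 2 < Lam r ρ := by
    have h : 1 < ρ / (10 * r) := by rw [lt_div_iff₀ (by positivity)]; linarith
    unfold Lam; linarith
  set Λ := Lam r ρ with hΛd
  have hΛp : 0 < Λ := by linarith
  have hvol : 0 < volume.real (ball (0 : ES (n + 1)) 1) :=
    ENNReal.toReal_pos (measure_ball_pos _ _ one_pos).ne' measure_ball_lt_top.ne
  have hkp : 0 < kH (9 / 16) := kH_pos (by norm_num)
  have hm := m0_pos (n + 1)
  set c0 := kH (9 / 16) * (1 / (4 * Λ)) ^ (n + 1) * volume.real (ball (0 : ES (n + 1)) 1)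
    / m0 (n + 1) with hc0
  have hc0p : 0 < c0 := by positivity
  refine ⟨max 2 (2 / c0), le_max_left _ _, ?_⟩
  set M := max 2 (2 / c0) with hM
  have hMc : 2 ≤ M * c0 := by
    have := le_max_right 2 (2 / c0)
    rwa [← hM, div_le_iff₀ hc0p] at this
  intro δ hδ hδ2 hδΛ f G q hq z0 s B hs hsr hz0 hB ⟨H1, H2⟩ x hx1 hx2 hx3
  set κ := 1 / (16 * Λ) with hκ
  have hκΛ : κ * Λ = 1 / 16 := by rw [hκ]; field_simp
  have hκ0 : 0 < κ := by positivity
  have hκ1 : κ ≤ 1 / 32 := by nlinarith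
  set t := δ * s / (4 * Λ) with ht
  have htp : 0 < t := by positivity
  have htΛ : 4 * Λ * t = δ * s := by rw [ht]; field_simp
  have hδs : 0 < δ * s := by positivity
  have hδs2 : δ * s ≤ s / 2 := by nlinarith
  have hxh : δ * s * (1 - κ) ≤ hh f x := by linarith
  have hxh2 : δ * s / 2 ≤ hh f x := by nlinarith
  have htκ : 2 * t ≤ κ * s := by
    have : 4 * Λ * t ≤ 2 * Λ * κ * s := by rw [htΛ]; gcongr
    nlinarith
  have hxs : ‖firstC x - z0‖ + 2 * t < s := by linarith
  have nrm : ∀ y, ‖firstC y - z0‖ ≤ ‖firstC x - z0‖ + dist y x := fun y => by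
    have := norm_add_le (firstC y - firstC x) (firstC x - z0)
    rw [sub_add_sub_cancel] at this
    linarith [dist_firstC_le y x]
  have nz : ∀ y : ES (n + 1), ‖firstC y - z0‖ < s → ‖firstC y‖ < r := fun y hy => by
    have := norm_le_norm_add_norm_sub' (firstC y) z0
    linarith
  have hxr : ‖firstC x‖ < r := nz x (by linarith)
  have hball : ∀ y ∈ ball x (2 * t), ‖firstC y - z0‖ < s ∧ 0 < hh f y ∧ hh f y < s := by
    intro y hy
    have hd : dist y x < 2 * t := hy
    have h1 : ‖firstC y - z0‖ < s := by linarith [nrm y]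
    have h2 := abs_le.1 (G.hh_lip (nz y h1) hxr)
    have h3 := mul_lt_mul_of_pos_left hd hΛp
    rw [← hΛd] at h2
    exact ⟨h1, by linarith, by linarith⟩
  have hballU : ball x (2 * t) ⊆ Ucyl f r ρ := fun y hy => by
    obtain ⟨h1, h2, h3⟩ := hball y hy
    exact (G.U_of (nz y h1) h2 (by linarith)).1
  set W : ES (n + 1) → ℝ := fun y => B - q y with hW
  have hqc : ContinuousOn q (ball x (2 * t)) := hq.cont.mono hballU
  have hWc : ContinuousOn W (ball x (2 * t)) := continuousOn_const.sub hqc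
  have hW0 : ∀ y ∈ ball x (2 * t), 0 ≤ W y := fun y hy => by
    obtain ⟨h1, h2, h3⟩ := hball y hy
    have := H1 y h1 h2 h3
    simp only [hW]; linarith
  have up := super_mean (l := 0) hWc htp (by linarith) le_rfl hW0 (by
    intro φ hφ hφ0
    have i1 := int_lap isOpen_ball hqc hφ
    have i2 := int_lap isOpen_ball (g := fun _ => B) continuousOn_const hφ
    have : ∫ y, W y * lap φ y = (∫ y, B * lap φ y) - ∫ y, q y * lap φ y := by
      rw [← integral_sub i2 i1]
      refine integral_congr_ae (Eventually.of_forall fun z => ?_)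
      simp only [hW]; ring
    rw [this, integral_const_mul, int_lap_zero hφ]
    have := hq.sub φ (testFun_mono hballU hφ) hφ0
    linarith)
  rw [zero_mul, zero_div, Real.exp_zero, one_mul] at up
  set t2 := t / (4 * Λ) with ht2
  have ht2p : 0 < t2 := by positivity
  have ht2Λ : Λ * t2 = t / 4 := by rw [ht2]; field_simp
  have ht2t : t2 ≤ t / 8 := by nlinarith
  have hsub : ball (x + (t / 2) • eN n) t2 ⊆ ball x (3 / 4 * t) := by
    apply ball_subset_ball'
    rw [dist_up, abs_of_pos (by positivity)]; linarith
  have low := Mn_ge_sub (c := (M + 1) * B) hWc htp (by linarith) ht2p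
    (fun z hz => hW0 z (ball_subset_ball (by linarith) hz)) hsub (by positivity) (by
      intro y hy
      obtain ⟨h1, h2, h3⟩ := hball y (ball_subset_ball (by linarith) (hsub hy))
      have hd : dist y (x + (t / 2) • eN n) < t2 := hy
      have a1 := (abs_le.1 (G.hh_lip (nz y h1) (y := x + (t / 2) • eN n)
        (by rw [firstC_up]; exact hxr))).1
      have a2 := mul_lt_mul_of_pos_left hd hΛp
      rw [hh_up, ← hΛd] at a1
      have a3 : κ * (δ * s) = t / 4 := by
        rw [← htΛ]; linear_combination 4 * t * hκΛ
      have := H2 y h1 (by linarith) h3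
      simp only [hW]; linarith)
  have e1 : kH (9 / 16) * (t ^ (n + 1))⁻¹ *
      (t2 ^ (n + 1) * volume.real (ball (0 : ES (n + 1)) 1)) = c0 * m0 (n + 1) := by
    have : t2 = t * (1 / (4 * Λ)) := by rw [ht2]; ring
    rw [this, mul_pow, hc0]
    field_simp
  rw [e1] at low
  have l2 : ((M + 1) * B * c0) * m0 (n + 1) ≤ W x * m0 (n + 1) := by linarith
  have l3 := le_of_mul_le_mul_right l2 hm
  simp only [hW] at l3
  nlinarith [mul_nonneg hB hc0p.le, mul_le_mul_of_nonneg_left hMc hB]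

lemma step_upper {r ρ : ℝ} (hr : 0 < r) (hρ : 10 * r < ρ) :
    ∃ θ : ℝ, 0 < θ ∧ θ < 1 ∧ ∀ (δ : ℝ), 0 < δ → 4 * Lam r ρ * δ ≤ 1 / 2 →
      ∀ f : ES n → ℝ, Geo r ρ f → ∀ q, Qf f r ρ q → ∀ (z0 : ES n) (s B M : ℝ), 0 < s → s ≤ r / 4 →
      ‖z0‖ + s ≤ 3 / 4 * r → 0 ≤ B → 0 ≤ M → CylB f q z0 δ s B M →
      ∀ k : ℕ, ∀ x, ‖firstC x - z0‖ + 4 * k * (δ * s) < s → 0 < hh f x → hh f x < s →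
        q x ≤ (1 - θ) ^ k * B := by
  obtain ⟨θ, h0, h1, H⟩ := decayU (n := n) hr hρ
  refine ⟨θ, h0, h1, ?_⟩
  intro δ hδ hδΛ f G q hq z0 s B M hs hsr hz0 hB hM ⟨H1, H2⟩
  have hΛ := G.Lam_gt
  set g : ES (n + 1) → ℝ := fun x => max ((Ucyl f r ρ).indicator q x) 0 with hg
  have hgc : ContinuousOn g {x | ‖firstC x‖ < r ∧ lastC x < ρ} := hq.contb.sup continuousOn_const
  have hδs : 0 < δ * s := by positivity
  have hΛδs : 4 * Lam r ρ * (δ * s) ≤ s / 2 := by nlinarith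
  have nz : ∀ y : ES (n + 1), ‖firstC y - z0‖ < s → ‖firstC y‖ < r := fun y hy => by
    have := norm_le_norm_add_norm_sub' (firstC y) z0
    linarith
  have hgU : ∀ x ∈ Ucyl f r ρ, g x = max (q x) 0 := fun x hx => by
    simp only [hg, indicator_of_mem hx]
  have memU : ∀ x, ‖firstC x - z0‖ < s → 0 < hh f x → hh f x < s → x ∈ Ucyl f r ρ :=
    fun x a b c => (G.U_of (nz x a) b (by linarith)).1
  have key : ∀ k : ℕ, ∀ x, ‖firstC x - z0‖ + 4 * k * (δ * s) < s → 0 < hh f x → hh f x < s →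
        g x ≤ (1 - θ) ^ k * B := by
    intro k
    induction k with
    | zero =>
      intro x a b c
      have a' : ‖firstC x - z0‖ < s := by simpa using a
      rw [hgU x (memU x a' b c)]
      simpa using ⟨H1 x a' b c, hB⟩
    | succ k ih =>
      intro x a b c
      push_cast at a
      have hk0 : (0:ℝ) ≤ 4 * k * (δ * s) := by positivity
      have a' : ‖firstC x - z0‖ < s := by nlinarith
      have hpw : 0 ≤ (1 - θ) ^ k * B := mul_nonneg (pow_nonneg (by linarith) _) hB
      rcases le_or_gt (δ * s) (hh f x) with hc | hc
      · have := H2 x a' hc c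
        rw [hgU x (memU x a' b c), max_eq_right (by nlinarith [mul_nonneg hM hB])]
        exact mul_nonneg (pow_nonneg (by linarith) _) hB
      · have := H f G g (δ * s) ((1 - θ) ^ k * B) x hδs hpw (by
            have := norm_le_norm_add_norm_sub' (firstC x) z0
            nlinarith) b hc.le (by linarith) hgc (by
            intro z _ hz
            have : z ∉ Ucyl f r ρ := fun h => by linarith [(mem_U.1 h).2.1]
            simp only [hg, indicator_of_notMem this, max_self]) (by
            intro z z1 z2 z3
            refine ih z ?_ z2 (by linarith)
            have := norm_add_le (firstC z - firstC x) (firstC x - z0)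
            rw [sub_add_sub_cancel] at this
            nlinarith) (by
            intro z hz hgz
            rw [hgU z hz] at hgz
            have hqz : 0 < q z := by
              by_contra hcon
              rw [max_eq_right (not_lt.1 hcon)] at hgz
              exact lt_irrefl _ hgz
            have ev0 : ∀ᶠ y in 𝓝 z, 0 < q y := continuousAt_const.eventually_lt
              (hq.cont.continuousAt (G.isOpen_U.mem_nhds hz)) hqz
            have ev : ∀ᶠ y in 𝓝 z, y ∈ Ucyl f r ρ ∧ 0 < q y := by
              filter_upwards [ev0, G.isOpen_U.mem_nhds hz] with y y1 y2
              exact ⟨y2, y1⟩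
            obtain ⟨ε, hε, hb⟩ := Metric.eventually_nhds_iff_ball.1 ev
            refine ⟨ε, hε, fun φ hφ hφ0 => ?_⟩
            rw [int_congr_test hφ (v := q) (fun y hy => by
              rw [hgU y (hb y hy).1, max_eq_left (hb y hy).2.le])]
            exact hq.sub φ (testFun_mono (fun y hy => (hb y hy).1) hφ) hφ0)
        rw [pow_succ]
        linarith
  intro k x a b c
  have hk0 : (0:ℝ) ≤ 4 * k * (δ * s) := by positivity
  have := key k x a b c
  rw [hgU x (memU x (by linarith) b c)] at this
  exact (le_max_left _ _).trans this

lemma step {r ρ : ℝ} (hr : 0 < r) (hρ : 10 * r < ρ) :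
    ∃ δ M α κ : ℝ, 0 < δ ∧ δ ≤ 1 / 2 ∧ 0 < M ∧ 0 < α ∧ 0 < κ ∧ κ ≤ 1 / 2 ∧
      ∀ f : ES n → ℝ, Geo r ρ f → ∀ q, Qf f r ρ q → ∀ (z0 : ES n) (s B : ℝ), 0 < s → s ≤ r / 4 →
      ‖z0‖ + s ≤ 3 / 4 * r → 0 ≤ B → CylB f q z0 δ s B M →
      CylB f q z0 δ ((1 - κ) * s) (α * B) M := by
  obtain ⟨M, hM2, hlow⟩ := step_lower (n := n) hr hρ
  obtain ⟨θ, hθ0, hθ1, hup⟩ := step_upper (n := n) hr hρ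
  have hΛ : 2 < Lam r ρ := by
    have h : 1 < ρ / (10 * r) := by rw [lt_div_iff₀ (by positivity)]; linarith
    unfold Lam; linarith
  have hΛp : 0 < Lam r ρ := by linarith
  have hMp : 0 < M := by linarith
  obtain ⟨m, hm⟩ := exists_pow_lt_of_lt_one (x := 1 / M) (by positivity)
    (by linarith : 1 - θ < 1)
  set κ := 1 / (16 * Lam r ρ) with hκ
  have hκ0 : 0 < κ := by positivity
  have hκΛ : κ * Lam r ρ = 1 / 16 := by rw [hκ]; field_simp
  have hκ1 : κ ≤ 1 / 32 := by nlinarith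
  set δ := κ / (8 * Lam r ρ * (m + 1)) with hδ
  have hδ0 : 0 < δ := by positivity
  have hδe : δ * (8 * Lam r ρ * (m + 1)) = κ := by rw [hδ]; field_simp
  have hm0 : (0:ℝ) ≤ m := Nat.cast_nonneg m
  have hδΛ : 4 * Lam r ρ * δ ≤ κ := by
    nlinarith [mul_nonneg (mul_nonneg hδ0.le hΛp.le) hm0, mul_pos hδ0 hΛp]
  have hδm : 4 * m * δ ≤ κ := by
    have : 0 ≤ δ * m * (Lam r ρ - 2) := mul_nonneg (by positivity) (by linarith)
    nlinarith [mul_pos hδ0 hΛp]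
  have hδκ : δ ≤ κ := by nlinarith
  refine ⟨δ, M, 1 / M, κ, hδ0, by linarith, hMp, by positivity, hκ0, by linarith, ?_⟩
  intro f G q hq z0 s B hs hsr hz0 hB hcyl
  have hMB : M * (1 / M * B) = B := by field_simp
  have hs' : (1 - κ) * s ≤ s := by nlinarith
  refine ⟨?_, ?_⟩
  · intro x x1 x2 x3
    have h := hup δ hδ0 (by linarith) f G q hq z0 s B M hs hsr hz0 hB hMp.le hcyl m x (by
      nlinarith) x2 (by linarith)
    exact h.trans (mul_le_mul_of_nonneg_right hm.le hB)
  · intro x x1 x2 x3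
    rw [hMB]
    rcases le_or_gt (δ * s) (hh f x) with hc | hc
    · have := hcyl.2 x (by linarith) hc (by linarith)
      nlinarith
    · exact hlow δ hδ0 (by linarith) (by nlinarith) f G q hq z0 s B hs hsr hz0 hB hcyl x x1 x2 hc
end

section
variable {n : ℕ}

lemma Sol.mk' {r ρ a C : ℝ} {f : ES n → ℝ} (hC : ∀ (U : Set (ES (n + 1))) (V v : ES (n + 1) → ℝ),
      IsOpen U → Uᶜ.Nonempty → VClass U a V → LVHarmonic U V v → (∀ z ∈ U, 0 < v z) →
      ∀ x y T, 0 < T → ball x (2 * T) ⊆ U → dist y x ≤ T / 2 → v y ≤ C * v x)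
    (G : Geo r ρ f) {V v : ES (n + 1) → ℝ} (hV : VClass (Ucyl f r ρ) a V)
    (hv : LVHarmonic (Ucyl f r ρ) V v) (hpos : ∀ x ∈ Ucyl f r ρ, 0 < v x)
    (hb : ∀ z ∈ graphBdry f r ρ, Tendsto v (𝓝[Ucyl f r ρ] z) (𝓝 0)) : Sol f r ρ C v where
  cont := hv.1
  pos := hpos
  bdry := hb
  harn := fun x y T => hC _ V v G.isOpen_U U_compl hV hv hpos x y T
  sub := fun φ hφ hφ0 => by rw [weak_eq hv hφ]; exact weak_nonneg hV hpos hφ hφ0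

lemma bhi {r ρ C : ℝ} (hr : 0 < r) (hρ : 10 * r < ρ) (hC : 1 ≤ C) :
    ∃ c : ℝ, 0 < c ∧ ∀ f : ES n → ℝ, Geo r ρ f → ∀ u v, Sol f r ρ C u → Sol f r ρ C v →
      LVHarmonic (Ucyl f r ρ) (fun _ => 0) u →
      ∀ x ∈ Ucyl f r ρ ∩ Tcyl n r ρ (1 / 2),
        v x / v ((ρ / 2) • eN n) ≤ c * (u x / u ((ρ / 2) • eN n)) := by
  obtain ⟨δ, M, α, κ, hδ0, hδ1, hM, hα, hκ0, hκ1, hstep⟩ := step (n := n) hr hρ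
  obtain ⟨K, hK1, hcar⟩ := carleson (n := n) hr hρ hC
  obtain ⟨D1, hD1, hch1⟩ := chain (n := n) (r := r) (ρ := ρ) hC (δ := r / 4) (by positivity)
  obtain ⟨D2, hD2, hch2⟩ := chain (n := n) (r := r) (ρ := ρ) hC (δ := δ * (r / 4)) (by positivity)
  set C1 := D2 * ((1 + M) * K) with hC1
  refine ⟨D1 * D1 + C1, by positivity, ?_⟩
  intro f G u v hu hv huh x ⟨hxU, hxT⟩
  have huA := hu.pos _ G.A_mem
  have hvA := hv.pos _ G.A_mem
  set uA := u ((ρ / 2) • eN n)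
  set vA := v ((ρ / 2) • eN n)
  have hux := hu.pos x hxU
  have hvx := hv.pos x hxU
  obtain ⟨hx1, hx2, hx3⟩ := mem_U.1 hxU
  have hxr : ‖firstC x‖ < 1 / 2 * r := hxT.1
  have hxl : lastC x < 1 / 2 * ρ := (abs_lt.1 hxT.2).2
  have hC1p : 0 < C1 := by positivity
  have hup : 0 < u x / uA := by positivity
  rcases le_or_gt (r / 4) (hh f x) with hc | hc
  · have h1 := (hch1 f G v hv.harn hv.pos x (by linarith) hc (by linarith)).1
    have h2 := (hch1 f G u hu.harn hu.pos x (by linarith) hc (by linarith)).2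
    have h3 : v x / vA ≤ D1 := by rwa [div_le_iff₀ hvA]
    have h4 : 1 ≤ D1 * (u x / uA) := by
      rw [← mul_div_assoc, le_div_iff₀ huA, one_mul]; exact h2
    nlinarith [mul_pos hC1p hup]
  · set q : ES (n + 1) → ℝ := fun y => v y / vA - C1 * (u y / uA) with hq
    have hqQ : Qf f r ρ q := by
      have hqc : ContinuousOn q (Ucyl f r ρ) :=
        (hv.cont.div_const _).sub (continuousOn_const.mul (hu.cont.div_const _))
      refine ⟨hqc, G.ext_cont hqc ?_, ?_⟩
      · intro z hz
        have := ((hv.bdry z hz).div_const vA).sub (((hu.bdry z hz).div_const uA).const_mul C1)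
        simpa using this
      · intro φ hφ hφ0
        have i1 := int_lap G.isOpen_U hv.cont hφ
        have i2 := int_lap G.isOpen_U hu.cont hφ
        have e : ∫ y, q y * lap φ y = vA⁻¹ * (∫ y, v y * lap φ y)
            - (C1 * uA⁻¹) * ∫ y, u y * lap φ y := by
          rw [← integral_const_mul, ← integral_const_mul, ← integral_sub (i1.const_mul _)
            (i2.const_mul _)]
          refine integral_congr_ae (Eventually.of_forall fun z => ?_)
          simp only [hq]; ring
        have e2 : ∫ y, u y * lap φ y = 0 := by
          rw [weak_eq huh hφ]; simp
        rw [e, e2, mul_zero, sub_zero]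
        exact mul_nonneg (inv_nonneg.2 hvA.le) (hv.sub φ hφ hφ0)
    have nz : ∀ y : ES (n + 1), ‖firstC y - firstC x‖ < r / 4 → ‖firstC y‖ ≤ 3 / 4 * r :=
      fun y hy => by
        have := norm_le_norm_add_norm_sub' (firstC y) (firstC x)
        linarith
    have h0 : CylB f q (firstC x) δ (r / 4) K M := by
      constructor
      · intro y y1 y2 y3
        have yU := (G.U_of (x := y) (by linarith [nz y y1]) y2 (by linarith)).1
        have h1 := hcar f G v hv y (nz y y1) y2 y3.le
        have h2 : v y / vA ≤ K := by rwa [div_le_iff₀ hvA]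
        have h3 : 0 < C1 * (u y / uA) := mul_pos hC1p (div_pos (hu.pos y yU) huA)
        simp only [hq]; linarith
      · intro y y1 y2 y3
        have y2' : 0 < hh f y := lt_of_lt_of_le (by positivity) y2
        obtain ⟨yU, yl⟩ := G.U_of (x := y) (by linarith [nz y y1]) y2' (by linarith)
        have h1 := hcar f G v hv y (nz y y1) y2' y3.le
        have h2 : v y / vA ≤ K := by rwa [div_le_iff₀ hvA]
        have h3 := (hch2 f G u hu.harn hu.pos y (by linarith [nz y y1]) y2
          (by linarith [G.rpos])).2
        have h4 : 1 ≤ D2 * (u y / uA) := by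
          rw [← mul_div_assoc, le_div_iff₀ huA, one_mul]; exact h3
        have h5 : (1 + M) * K ≤ C1 * (u y / uA) := by
          calc (1 + M) * K = (1 + M) * K * 1 := by ring
            _ ≤ (1 + M) * K * (D2 * (u y / uA)) := by gcongr
            _ = _ := by rw [hC1]; ring
        simp only [hq]; linarith
    have hκp : 0 < 1 - κ := by linarith
    have iter : ∀ j : ℕ, CylB f q (firstC x) δ ((1 - κ) ^ j * (r / 4)) (α ^ j * K) M := by
      intro j
      induction j with
      | zero => simpa using h0
      | succ j ih =>
        have hle : (1 - κ) ^ j * (r / 4) ≤ r / 4 := by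
          have : (1 - κ) ^ j ≤ 1 := pow_le_one₀ hκp.le (by linarith)
          nlinarith
        have := hstep f G q hqQ (firstC x) _ _ (by positivity) hle (by linarith) (by positivity) ih
        rw [pow_succ', pow_succ', mul_assoc, mul_assoc]
        exact this
    have hex : ∃ j : ℕ, (1 - κ) ^ j * (r / 4) ≤ hh f x := by
      obtain ⟨j, hj⟩ := exists_pow_lt_of_lt_one (x := hh f x / (r / 4)) (by positivity)
        (by linarith : 1 - κ < 1)
      rw [lt_div_iff₀ (by positivity)] at hj
      exact ⟨j, hj.le⟩
    classical
    have hspec := Nat.find_spec hex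
    have hmin := fun k => Nat.find_min hex (m := k)
    generalize Nat.find hex = j at hspec hmin
    have hqx : q x ≤ 0 := by
      cases j with
      | zero => rw [pow_zero] at hspec; linarith
      | succ k =>
        have h1 := hmin k (Nat.lt_succ_self k)
        push Not at h1
        have hsk : 0 < (1 - κ) ^ k * (r / 4) := by positivity
        have := (iter k).2 x (by rw [sub_self, norm_zero]; exact hsk) (by
          rw [pow_succ'] at hspec; nlinarith) h1
        have h3 : 0 ≤ M * (α ^ k * K) := by positivity
        linarith
    simp only [hq] at hqx
    nlinarith [mul_pos (by positivity : 0 < D1 * D1) hup]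
end

/-- Lemma `eBHI`. If `u` is positive harmonic in `U = U_f(r,ρ)`,
`v` is positive `(Δ-V)`-harmonic in `U`, `V ∈ 𝒱(U,a)`, and `u = v = 0` on `∂_#U`,
then `v(x)/v(A) ≤ c · u(x)/u(A)` on `U ∩ T(1/2)` for a constant `c = c(ρ/r, N, a)`,
where `A = (0,…,0,ρ/2)`. -/
theorem statement11 {n : ℕ} (hn : 1 ≤ n) (r ρ : ℝ) (hr : 0 < r) (hρ : 10 * r < ρ)
    (a : ℝ) (ha : 0 < a) :
    ∃ c : ℝ, 0 < c ∧
      ∀ f : ES n → ℝ, f 0 = 0 →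
        LipschitzOnWith (Real.toNNReal (ρ / (10 * r))) f (ball 0 r) →
        ∀ V : ES (n+1) → ℝ, VClass (Ucyl f r ρ) a V →
          ∀ u v : ES (n+1) → ℝ,
            LVHarmonic (Ucyl f r ρ) (fun _ => 0) u → (∀ x ∈ Ucyl f r ρ, 0 < u x) →
            (∀ z ∈ graphBdry f r ρ, Tendsto u (𝓝[Ucyl f r ρ] z) (𝓝 0)) →
            LVHarmonic (Ucyl f r ρ) V v → (∀ x ∈ Ucyl f r ρ, 0 < v x) →
            (∀ z ∈ graphBdry f r ρ, Tendsto v (𝓝[Ucyl f r ρ] z) (𝓝 0)) →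
            ∀ x ∈ Ucyl f r ρ ∩ Tcyl n r ρ (1/2),
              v x / v (EuclideanSpace.single (Fin.last n) (ρ / 2)) ≤
                c * (u x / u (EuclideanSpace.single (Fin.last n) (ρ / 2))) := by
  obtain ⟨C, hC1, hC⟩ := harnack (n + 1) a
  obtain ⟨c, hc, H⟩ := bhi (n := n) hr hρ hC1
  refine ⟨c, hc, ?_⟩
  intro f f0 hlip V hV u v hu hupos hub hv hvpos hvb x hx
  have hρp : 0 < ρ := by linarith
  have G : Geo r ρ f := by
    refine ⟨hr, hρ, f0, fun x y hx hy => ?_⟩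
    have := hlip.dist_le_mul x (by simpa using hx) y (by simpa using hy)
    rwa [Real.coe_toNNReal _ (by positivity), Real.dist_eq, dist_eq_norm] at this
  rw [single_eq]
  refine H f G u v (Sol.mk' hC G (V := fun _ => 0) ⟨measurable_const, fun x _ => ⟨le_rfl, ?_⟩⟩
    hu hupos hub) (Sol.mk' hC G hV hv hvpos hvb) hu x hx
  simp [ha.le]
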